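/- Let p > 3 be a prime with p ≡ 3 (mod 4) and let K = ℚ(√-p). Then the counting function a_K(n) (the number of quadratic extensions L/K inside a fixed algebraic closure with absolute discriminant at most n) satisfies a_K(n) = C·n + o(n) as n → ∞, where C = (π · h_K)/(2 · p^{5/2} · ζ_K(2)) · ∏_{𝔭 | 2} g_𝔭(1)/(1 + N(𝔭)^{-1}); here the product is over the prime ideals 𝔭 of 𝓞_K above 2, and g_𝔭(s) = 1 + N(𝔭)^{-2s} + 2·N(𝔭)^{-3s} if N(𝔭) = 2 (i.e. 2 splits in K), while g_𝔭(s) = 1 + 3·N(𝔭)^{-2s} + 4·N(𝔭)^{-3s} if N(𝔭) = 4 (i.e. 2 is inert in K). Equivalently, a_K(n)/n tends to C. -/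

import Mathlib

open NumberField Filter

/-- The value of the Dedekind zeta function of `K` at `2`, defined as the series
`∑ N(I)^{-2}` over nonzero ideals `I` of the ring of integers of `K`. -/
noncomputable def dedekindZetaTwo (K : Type*) [Field K] [NumberField K] : ℝ :=
  ∑' I : {I : Ideal (𝓞 K) // I ≠ ⊥}, ((Ideal.absNorm I.1 : ℝ)) ^ (-2 : ℤ)

/-- The local factor `g_𝔭(s)` at a prime `𝔭` above 2 with norm `q`:
`1 + q^{-2s} + 2 q^{-3s}` if `q = 2` (split case), and
`1 + 3 q^{-2s} + 4 q^{-3s}` otherwise (inert case, `q = 4`). -/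
noncomputable def gFactor (q : ℕ) (s : ℝ) : ℝ :=
  if q = 2 then 1 + (q : ℝ) ^ (-(2 * s)) + 2 * (q : ℝ) ^ (-(3 * s))
  else 1 + 3 * (q : ℝ) ^ (-(2 * s)) + 4 * (q : ℝ) ^ (-(3 * s))

/-- `quadCount K n` is the number of quadratic extensions `L` of `K` inside a fixed
algebraic closure of `K` with absolute discriminant at most `n`. -/
noncomputable def quadCount (K : Type*) [Field K] [NumberField K] (n : ℕ) : ℕ :=
  Nat.card {L : IntermediateField K (AlgebraicClosure K) //
    Module.finrank K L = 2 ∧ ∃ h : NumberField L, |@NumberField.discr L _ h| ≤ (n : ℤ)}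

open NumberField Filter Topology nonZeroDivisors

section Moeb
open UniqueFactorizationMonoid

lemma moeb_mul_prime {α : Type*} [CommMonoidWithZero α] [UniqueFactorizationMonoid α]
    {P e : α} (hP : Irreducible P) (h : ¬ P ∣ e) : moebius (P * e) = - moebius e := by
  rw [((hP.isRelPrime_iff_not_dvd).2 h).moebius_mul, hP.moebius_eq]; ring

lemma moeb_sum {R : Type*} [CommRing R] [IsDedekindDomain R] (a : Ideal R) (ha : a ≠ ⊥)
    (s : Finset (Ideal R)) (hs : ∀ d, d ∈ s ↔ d ∣ a) :
    ∑ d ∈ s, moebius d = if a = 1 then 1 else 0 := by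
  classical
  split_ifs with h1
  · subst h1
    have : s = {1} := by
      ext d; rw [hs, Finset.mem_singleton, ← isUnit_iff_dvd_one, Ideal.isUnit_iff, Ideal.one_eq_top]
    rw [this, Finset.sum_singleton, moebius_one]
  · have hu : ¬ IsUnit a := by
      rwa [Ideal.isUnit_iff, ← Ideal.one_eq_top]
    obtain ⟨P, hP, hPa⟩ := WfDvdMonoid.exists_irreducible_factor hu ha
    have h2 : ∑ d ∈ s, moebius d = ∑ d ∈ s with Squarefree d, moebius d := by
      symm
      apply Finset.sum_subset (Finset.filter_subset _ _)
      intro x hx hx'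
      apply moebius_of_not_squarefree
      intro h; exact hx' (Finset.mem_filter.2 ⟨hx, h⟩)
    rw [h2]
    have key : ∀ e : Ideal R, Squarefree (P * e) → ¬ P ∣ e := by
      rintro e he ⟨f, rfl⟩
      exact hP.not_isUnit (he P ⟨f, by rw [mul_assoc]⟩)
    have key2 : ∀ d (h : P ∣ d), P * h.choose = d := fun d h => h.choose_spec.symm
    refine Finset.sum_involution (fun d _ => if h : P ∣ d then h.choose else P * d) ?_ ?_ ?_ ?_
    · intro d hd
      simp only [Finset.mem_filter] at hd
      split_ifs with h
      · have := key h.choose (by rw [key2]; exact hd.2)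
        nth_rewrite 1 [← key2 d h]
        rw [moeb_mul_prime hP this]; ring
      · rw [moeb_mul_prime hP h]; ring
    · intro d hd _
      simp only [Finset.mem_filter] at hd
      split_ifs with h
      · intro h'
        have := key h.choose (by rw [key2]; exact hd.2)
        rw [h'] at this; exact this h
      · intro h'
        exact h ⟨d, h'.symm⟩
    · intro d hd
      simp only [Finset.mem_filter, hs] at hd ⊢
      split_ifs with h
      · have hdv : h.choose ∣ d := ⟨P, by rw [mul_comm, key2]⟩
        exact ⟨hdv.trans hd.1, hd.2.squarefree_of_dvd hdv⟩
      · have hr := (hP.isRelPrime_iff_not_dvd).2 h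
        exact ⟨hr.mul_dvd hPa hd.1, (squarefree_mul_iff).2 ⟨hr, hP.squarefree, hd.2⟩⟩
    · intro d hd
      simp only [Finset.mem_filter, hs] at hd
      by_cases h : P ∣ d
      · have := key h.choose (by rw [key2]; exact hd.2)
        simp only [h, dif_pos, this, dif_neg, not_false_eq_true, key2]
      · have h3 : P ∣ P * d := dvd_mul_right _ _
        simp only [h, dif_neg, not_false_eq_true, h3, dif_pos]
        exact mul_left_cancel₀ hP.ne_zero (key2 _ h3)

variable (K : Type*) [Field K] [NumberField K]

noncomputable def muI (I : (Ideal (𝓞 K))⁰) : ℝ := (moebius (I : Ideal (𝓞 K)) : ℤ)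

lemma abs_muI_le (I : (Ideal (𝓞 K))⁰) : |muI K I| ≤ 1 := by
  unfold muI moebius
  split_ifs <;> simp

noncomputable def nI (I : (Ideal (𝓞 K))⁰) : ℝ := (Ideal.absNorm (I : Ideal (𝓞 K)) : ℝ)

lemma nI_ge_one (I : (Ideal (𝓞 K))⁰) : 1 ≤ nI K I := by
  unfold nI
  exact_mod_cast Ideal.absNorm_pos_of_nonZeroDivisors I

lemma nI_mul (I J : (Ideal (𝓞 K))⁰) : nI K (I * J) = nI K I * nI K J := by
  simp [nI]

lemma nI_one : nI K 1 = 1 := by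
  simp [nI]

/-- Moebius inversion in summed form. -/
lemma moeb_tsum (G : (Ideal (𝓞 K))⁰ → ℝ)
    (hsum : Summable fun p : (Ideal (𝓞 K))⁰ × (Ideal (𝓞 K))⁰ => muI K p.1 * G (p.1 * p.2)) :
    ∑' f, muI K f * ∑' g, G (f * g) = G 1 := by
  classical
  simp_rw [← tsum_mul_left]
  rw [← hsum.tsum_prod]
  let e := Equiv.sigmaFiberEquiv (fun p : (Ideal (𝓞 K))⁰ × (Ideal (𝓞 K))⁰ => p.1 * p.2)
  rw [← e.tsum_eq]
  have hs2 : Summable fun c => muI K (e c).1 * G ((e c).1 * (e c).2) := (e.summable_iff).2 hsum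
  rw [hs2.tsum_sigma]
  have hfib : ∀ h : (Ideal (𝓞 K))⁰,
      ∑' x : {p : (Ideal (𝓞 K))⁰ × (Ideal (𝓞 K))⁰ // p.1 * p.2 = h},
        muI K x.1.1 * G (x.1.1 * x.1.2) = if h = 1 then G h else 0 := by
    intro h
    have hfin : {d : Ideal (𝓞 K) | d ∣ (h : Ideal (𝓞 K))}.Finite := by
      apply (Ideal.finite_setOfPred_absNorm_le (S := 𝓞 K)
        (Ideal.absNorm (h : Ideal (𝓞 K)))).subset
      intro d hd
      exact Nat.le_of_dvd (Ideal.absNorm_pos_of_nonZeroDivisors h)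
        (map_dvd Ideal.absNorm hd)
    have hne : (h : Ideal (𝓞 K)) ≠ ⊥ := nonZeroDivisors.coe_ne_zero h
    have h1 := moeb_sum (h : Ideal (𝓞 K)) hne hfin.toFinset (by simp)
    have hnz : ∀ d : Ideal (𝓞 K), d ∣ h → d ∈ (Ideal (𝓞 K))⁰ := by
      intro d hd
      rw [mem_nonZeroDivisors_iff_ne_zero]
      rintro rfl
      exact hne (zero_dvd_iff.1 hd)
    let e2 : {p : (Ideal (𝓞 K))⁰ × (Ideal (𝓞 K))⁰ // p.1 * p.2 = h} ≃
        {d : Ideal (𝓞 K) // d ∈ hfin.toFinset} :=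
      { toFun := fun p => ⟨p.1.1, by
          rw [Set.Finite.mem_toFinset]
          exact ⟨p.1.2, (congrArg Subtype.val p.2).symm⟩⟩
        invFun := fun d => by
          have hd : d.1 ∣ (h : Ideal (𝓞 K)) := (Set.Finite.mem_toFinset hfin).1 d.2
          have hd2 : (h : Ideal (𝓞 K)) = d.1 * hd.choose := hd.choose_spec
          exact ⟨(⟨d.1, hnz _ hd⟩, ⟨hd.choose, hnz _ ⟨d.1, by rw [mul_comm]; exact hd2⟩⟩),
            Subtype.ext hd2.symm⟩
        left_inv := by
          rintro ⟨⟨a, b⟩, hab⟩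
          apply Subtype.ext
          apply Prod.ext
          · rfl
          · apply Subtype.ext
            have hd : (a : Ideal (𝓞 K)) ∣ (h : Ideal (𝓞 K)) := ⟨b, by rw [← hab]; rfl⟩
            have hd2 : (h : Ideal (𝓞 K)) = a * hd.choose := hd.choose_spec
            refine mul_left_cancel₀ (nonZeroDivisors.coe_ne_zero a) (hd2.symm.trans ?_)
            exact (congrArg Subtype.val hab).symm
        right_inv := fun d => rfl }
    have h2 : ∀ x : {p : (Ideal (𝓞 K))⁰ × (Ideal (𝓞 K))⁰ // p.1 * p.2 = h},
        muI K x.1.1 * G (x.1.1 * x.1.2) =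
        (fun d : {d : Ideal (𝓞 K) // d ∈ hfin.toFinset} =>
          ((moebius d.1 : ℤ) : ℝ) * G h) (e2 x) := by
      intro x; rw [x.2]; rfl
    rw [tsum_congr h2, e2.tsum_eq (fun d : {d : Ideal (𝓞 K) // d ∈ hfin.toFinset} =>
          ((moebius d.1 : ℤ) : ℝ) * G h), tsum_mul_right, Finset.tsum_subtype hfin.toFinset
      (fun d => ((moebius d : ℤ) : ℝ)), ← Int.cast_sum, h1]
    have : (h : Ideal (𝓞 K)) = 1 ↔ h = 1 := by
      rw [← Subtype.coe_inj]; rfl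
    simp only [this]
    split_ifs <;> simp
  have : ∀ h, ∑' c, (muI K (e ⟨h, c⟩).1 * G ((e ⟨h, c⟩).1 * (e ⟨h, c⟩).2)) =
    if h = 1 then G h else 0 := fun h => hfib h
  simp_rw [this]
  rw [tsum_ite_eq]

end Moeb

open NumberField Filter Topology nonZeroDivisors

section Tauber
variable (K : Type*) [Field K] [NumberField K]

lemma summable_card_sq :
    Summable fun n : ℕ => (Nat.card {I : Ideal (𝓞 K) // Ideal.absNorm I = n} : ℝ) / (n : ℝ) ^ 2 := by
  have h1 : Tendsto (fun n : ℕ => (∑ k ∈ Finset.Icc 1 n,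
      (Nat.card {I : Ideal (𝓞 K) // Ideal.absNorm I = k} : ℝ)) / n) atTop
      (𝓝 (dedekindZeta_residue K)) := by
    refine ((Ideal.tendsto_norm_le_div_atTop₀ K).comp tendsto_natCast_atTop_atTop).congr fun n ↦ ?_
    simp only [Function.comp_apply, Nat.cast_le, ← Nat.cast_sum]
    congr
    rw [← add_left_inj 1, ← Ideal.card_norm_le_eq_card_norm_le_add_one,
      show Finset.Icc 1 n = Finset.Ioc 0 n from Finset.Icc_succ_left_eq_Ioc _ _,
      show 1 = Nat.card {I : Ideal (𝓞 K) // Ideal.absNorm I = 0} by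
        simp [Ideal.absNorm_eq_zero_iff],
      Finset.sum_Ioc_add_eq_sum_Icc (n.zero_le),
      ← Finset.card_preimage_eq_sum_card_image_eq
        (fun k _ ↦ Ideal.finite_setOfPred_absNorm_eq k)]
    simp [Set.coe_eq_subtype]
  have h2 : (fun n : ℕ => ∑ k ∈ Finset.Icc 1 n,
      ‖((Nat.card {I : Ideal (𝓞 K) // Ideal.absNorm I = k} : ℕ) : ℂ)‖) =O[atTop]
      fun n : ℕ => (n : ℝ) ^ (1 : ℝ) := by
    simp only [Complex.norm_natCast, Real.rpow_one]
    have h3 := h1.isBigO_one ℝ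
    have h4 := h3.mul (Asymptotics.isBigO_refl (fun n : ℕ => (n : ℝ)) atTop)
    refine (Asymptotics.IsBigO.congr' h4 ?_ ?_)
    · filter_upwards [eventually_gt_atTop 0] with n hn
      have : (n : ℝ) ≠ 0 := by positivity
      field_simp
    · filter_upwards with n
      simp
  have h5 := LSeriesSummable_of_sum_norm_bigO (s := 2) h2 zero_le_one (by norm_num)
  have h6 := h5.norm
  refine h6.congr fun n => ?_
  rw [LSeries.norm_term_eq]
  split_ifs with hn
  · simp [hn]
  · simp

lemma summable_nI : Summable fun I : (Ideal (𝓞 K))⁰ => ((nI K I) ^ 2)⁻¹ := by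
  suffices h : Summable fun I : Ideal (𝓞 K) => (((Ideal.absNorm I : ℕ) : ℝ) ^ 2)⁻¹ from
    h.comp_injective Subtype.val_injective
  let e := Equiv.sigmaFiberEquiv (fun I : Ideal (𝓞 K) => Ideal.absNorm I)
  rw [← e.summable_iff, summable_sigma_of_nonneg (by intro x; simp only [Function.comp]; positivity)]
  have hf : ∀ n : ℕ, Finite {I : Ideal (𝓞 K) // Ideal.absNorm I = n} :=
    fun n => Ideal.finite_setOfPred_absNorm_eq n
  constructor
  · intro n
    exact Summable.of_finite
  · refine (summable_card_sq K).congr fun n => ?_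
    have : ∀ y : {I : Ideal (𝓞 K) // Ideal.absNorm I = n},
      ((fun I : Ideal (𝓞 K) => (((Ideal.absNorm I : ℕ) : ℝ) ^ 2)⁻¹) ∘ e) ⟨n, y⟩ =
        ((n : ℝ) ^ 2)⁻¹ := by
      intro y
      change (((Ideal.absNorm y.1 : ℕ) : ℝ) ^ 2)⁻¹ = _
      rw [y.2]
    rw [tsum_congr this, tsum_const, nsmul_eq_mul, div_eq_mul_inv]

noncomputable def zeta2 : ℝ := ∑' I : (Ideal (𝓞 K))⁰, ((nI K I) ^ 2)⁻¹

lemma zeta2_pos : 0 < zeta2 K := by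
  refine (summable_nI K).tsum_pos (fun I => by positivity) 1 ?_
  rw [nI_one]; norm_num

lemma tsum_mu : ∑' I : (Ideal (𝓞 K))⁰, muI K I * ((nI K I) ^ 2)⁻¹ = (zeta2 K)⁻¹ := by
  have h := moeb_tsum K (fun I => ((nI K I) ^ 2)⁻¹) ?_
  · simp only [nI_mul, mul_pow, mul_inv, tsum_mul_left, nI_one] at h
    simp only [← mul_assoc, tsum_mul_right] at h
    change _ * zeta2 K = _ at h
    rw [eq_inv_of_mul_eq_one_left (h.trans (by norm_num))]
  · have h2 := (summable_nI K).mul_of_nonneg (summable_nI K) (fun I => by positivity)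
      (fun I => by positivity)
    refine Summable.of_norm_bounded h2 ?_
    intro p
    simp only [nI_mul, mul_pow, mul_inv, norm_mul, norm_inv, norm_pow, Real.norm_eq_abs, sq_abs]
    have := abs_muI_le K p.1
    have h0 : 0 ≤ (nI K p.1 ^ 2)⁻¹ * (nI K p.2 ^ 2)⁻¹ := by positivity
    nlinarith

lemma finite_nI_le (Y : ℝ) : {I : (Ideal (𝓞 K))⁰ | nI K I ≤ Y}.Finite := by
  refine (Ideal.finite_setOfPred_absNorm_le₀ (S := 𝓞 K) ⌊Y⌋₊).subset ?_
  intro I hI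
  exact Nat.le_floor hI

lemma mob_inv (Q T : ℝ → ℝ) (hQ0 : ∀ Y < 1, Q Y = 0)
    (hT : ∀ Y, T Y = ∑' g, Q (Y / (nI K g) ^ 2)) (Y : ℝ) :
    Q Y = ∑' f, muI K f * T (Y / (nI K f) ^ 2) := by
  have h := moeb_tsum K (fun I => Q (Y / (nI K I) ^ 2)) ?_
  · rw [nI_one] at h
    simp only [one_pow, div_one] at h
    rw [← h]
    congr 1; ext f; congr 1
    rw [hT]
    congr 1; ext g
    rw [nI_mul, div_div, mul_pow]
  · apply summable_of_hasFiniteSupport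
    refine ((finite_nI_le K Y).prod (finite_nI_le K Y)).subset ?_
    rintro ⟨f, g⟩ hp
    have hf := nI_ge_one K f
    have hg := nI_ge_one K g
    have hQ : ¬ (Y / (nI K (f * g)) ^ 2 < 1) := by
      intro h
      apply hp
      simp only [hQ0 _ h, mul_zero]
    rw [not_lt, nI_mul, le_div_iff₀ (by positivity), one_mul] at hQ
    have h1 : nI K f ≤ (nI K f * nI K g) ^ 2 := by
      have : 1 ≤ nI K f * nI K g := by nlinarith
      nlinarith
    have h2 : nI K g ≤ (nI K f * nI K g) ^ 2 := by
      have : 1 ≤ nI K f * nI K g := by nlinarith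
      nlinarith
    exact ⟨h1.trans hQ, h2.trans hQ⟩

lemma tauber (Q T : ℝ → ℝ) (κ : ℝ) (hQ0 : ∀ Y < 1, Q Y = 0) (hTmono : Monotone T)
    (hT : ∀ Y, T Y = ∑' g, Q (Y / (nI K g) ^ 2))
    (hlim : Tendsto (fun Y => T Y / Y) atTop (𝓝 κ)) :
    Tendsto (fun Y => Q Y / Y) atTop (𝓝 (κ / zeta2 K)) := by
  have hT0 : ∀ Y < 1, T Y = 0 := by
    intro Y hY
    rw [hT]
    have : ∀ g, Q (Y / (nI K g) ^ 2) = 0 := by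
      intro g
      apply hQ0
      have hg := nI_ge_one K g
      rw [div_lt_one (by positivity)]
      nlinarith
    simp [this]
  have hTn : ∀ Y, 0 ≤ T Y := by
    intro Y
    have : T (min Y 0) ≤ T Y := hTmono (min_le_left _ _)
    rw [hT0 _ ((min_le_right _ _).trans_lt one_pos)] at this
    exact this
  obtain ⟨C, hC0, hC⟩ : ∃ C : ℝ, 0 ≤ C ∧ ∀ Y, 0 < Y → T Y ≤ C * Y := by
    have h1 := hlim.eventually (gt_mem_nhds (lt_add_one κ))
    obtain ⟨Y0, hY0⟩ := eventually_atTop.1 h1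
    refine ⟨max (κ + 1) (T Y0), le_max_of_le_right (hTn _), ?_⟩
    intro Y hY
    rcases le_or_gt Y0 Y with h | h
    · have := (hY0 Y h).le
      rw [div_le_iff₀ hY] at this
      exact this.trans (mul_le_mul_of_nonneg_right (le_max_left _ _) hY.le)
    · rcases lt_or_ge Y 1 with h2 | h2
      · rw [hT0 _ h2]
        exact mul_nonneg (le_max_of_le_right (hTn _)) hY.le
      · calc T Y ≤ T Y0 := hTmono h.le
          _ ≤ T Y0 * Y := le_mul_of_one_le_right (hTn _) h2
          _ ≤ _ := mul_le_mul_of_nonneg_right (le_max_right _ _) hY.le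
  have key : Tendsto (fun Y : ℝ => ∑' f, muI K f * T (Y / (nI K f) ^ 2) / Y) atTop
      (𝓝 (∑' f, muI K f * ((nI K f) ^ 2)⁻¹ * κ)) := by
    refine tendsto_tsum_of_dominated_convergence (bound := fun f => C * ((nI K f) ^ 2)⁻¹)
      ((summable_nI K).mul_left C) ?_ ?_
    · intro f
      have hf := nI_ge_one K f
      have h1 : Tendsto (fun Y : ℝ => Y / (nI K f) ^ 2) atTop atTop :=
        tendsto_id.atTop_div_const (by positivity)
      have h2 := (hlim.comp h1).const_mul (muI K f * ((nI K f) ^ 2)⁻¹)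
      refine h2.congr fun Y => ?_
      simp only [Function.comp]
      have : nI K f ≠ 0 := by positivity
      rcases eq_or_ne Y 0 with rfl | hY
      · simp
      · field_simp
    · filter_upwards [eventually_gt_atTop 0] with Y hY f
      have hf := nI_ge_one K f
      rw [norm_div, norm_mul, Real.norm_eq_abs, Real.norm_eq_abs, Real.norm_eq_abs,
        abs_of_pos hY, abs_of_nonneg (hTn _), div_le_iff₀ hY]
      calc |muI K f| * T (Y / nI K f ^ 2) ≤ 1 * (C * (Y / nI K f ^ 2)) :=
            mul_le_mul (abs_muI_le K f) (hC _ (by positivity)) (hTn _) zero_le_one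
        _ = _ := by ring
  rw [tsum_mul_right, tsum_mu] at key
  rw [div_eq_inv_mul]
  refine key.congr fun Y => ?_
  rw [tsum_div_const, ← mob_inv K Q T hQ0 hT]

end Tauber

open NumberField Filter Topology nonZeroDivisors

section KFacts
variable {p : ℕ} {K : Type*} [Field K] [NumberField K]

lemma kf_basis (hp : p.Prime) (hdeg : Module.finrank ℚ K = 2) {r : K} (hr : r ^ 2 = -(p : K)) :
    ∃ B : Module.Basis (Fin 2) ℚ K, B 0 = 1 ∧ B 1 = r := by
  have hli : LinearIndependent ℚ ![(1 : K), r] := by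
    rw [LinearIndependent.pair_iff]
    intro s t hst
    have ht : t = 0 := by
      by_contra ht
      have hrr : r = algebraMap ℚ K (-s / t) := by
        have ht' : (algebraMap ℚ K t) ≠ 0 := by simpa using ht
        rw [Algebra.smul_def, Algebra.smul_def, mul_one] at hst
        rw [map_div₀, map_neg, eq_div_iff ht']
        linear_combination hst
      rw [hrr, ← map_pow] at hr
      have h2 : ((-s / t) ^ 2 : ℚ) = -(p : ℚ) := by
        apply (algebraMap ℚ K).injective
        rw [hr]; simp
      have : (0 : ℚ) < p := by exact_mod_cast hp.pos
      nlinarith [sq_nonneg (-s / t)]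
    subst ht
    simpa using hst
  refine ⟨basisOfLinearIndependentOfCardEqFinrank hli (by simp [hdeg]), ?_, ?_⟩ <;> simp

lemma kf_repr (hp : p.Prime) (hdeg : Module.finrank ℚ K = 2) {r : K} (hr : r ^ 2 = -(p : K)) (x : K) :
    ∃ a b : ℚ, x = algebraMap ℚ K a + algebraMap ℚ K b * r := by
  obtain ⟨B, h0, h1⟩ := kf_basis hp hdeg hr
  refine ⟨B.repr x 0, B.repr x 1, ?_⟩
  conv_lhs => rw [← B.sum_repr x]
  simp [Fin.sum_univ_two, h0, h1, Algebra.smul_def]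

lemma kf_trace (hp : p.Prime) (hdeg : Module.finrank ℚ K = 2) {r : K} (hr : r ^ 2 = -(p : K)) :
    Algebra.trace ℚ K r = 0 := by
  obtain ⟨B, h0, h1⟩ := kf_basis hp hdeg hr
  rw [Algebra.trace_eq_matrix_trace B, Matrix.trace_fin_two, Algebra.leftMulMatrix_eq_repr_mul,
    Algebra.leftMulMatrix_eq_repr_mul, h0, h1]
  have e1 : r * 1 = B 1 := by rw [h1, mul_one]
  have e2 : r * r = (-(p : ℚ)) • B 0 := by
    rw [h0, ← pow_two, hr, Algebra.smul_def]; simp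
  rw [e1, e2]
  simp

lemma kf_discr (hp : p.Prime) (hpmod : p % 4 = 3) (hdeg : Module.finrank ℚ K = 2)
    {r : K} (hr : r ^ 2 = -(p : K)) : (discr K).natAbs = p := by
  obtain ⟨k, hk⟩ : ∃ k, p + 1 = 4 * k := ⟨(p + 1) / 4, by omega⟩
  have hkK : (p : K) = 4 * k - 1 := by
    have : ((p + 1 : ℕ) : K) = ((4 * k : ℕ) : K) := by rw [hk]
    push_cast at this
    linear_combination this
  have hθ0 : ((1 + r) / 2) ^ 2 = (1 + r) / 2 - (k : K) := by
    rw [hkK] at hr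
    field_simp
    linear_combination hr
  have hθi : IsIntegral ℤ ((1 + r) / 2) := by
    refine ⟨Polynomial.X ^ 2 - Polynomial.X + Polynomial.C (k : ℤ), ?_, ?_⟩
    · monicity!
    · simp [hθ0]
  let θ : 𝓞 K := ⟨(1 + r) / 2, hθi⟩
  have hθc : algebraMap (𝓞 K) K θ = (1 + r) / 2 := rfl
  have hθ : θ * θ = θ - (k : 𝓞 K) := by
    apply RingOfIntegers.ext
    change ((1 + r) / 2) * ((1 + r) / 2) = (1 + r) / 2 - (k : K)
    rw [← hθ0, pow_two]
  have htr1 : Algebra.trace ℤ (𝓞 K) 1 = 2 := by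
    have := Algebra.trace_algebraMap (R := ℤ) (S := 𝓞 K) 1
    rw [map_one] at this
    rw [this, RingOfIntegers.rank, hdeg]; norm_num
  have htrθ : Algebra.trace ℤ (𝓞 K) θ = 1 := by
    have h : ((Algebra.trace ℤ (𝓞 K) θ : ℤ) : ℚ) = 1 := by
      rw [Algebra.coe_trace_int]
      have : (θ : K) = algebraMap ℚ K (1 / 2) + (1 / 2 : ℚ) • r := by
        change (1 + r) / 2 = _
        rw [Algebra.smul_def]
        simp; ring
      rw [this, map_add, map_smul, kf_trace hp hdeg hr, Algebra.trace_algebraMap, hdeg]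
      norm_num
    exact_mod_cast h
  have htrθ2 : Algebra.trace ℤ (𝓞 K) (θ * θ) = 1 - 2 * k := by
    have : (θ * θ) = θ - (k : ℤ) • (1 : 𝓞 K) := by rw [hθ]; simp
    rw [this, map_sub, map_smul, htr1, htrθ]; simp; ring
  have hcard : Fintype.card (Module.Free.ChooseBasisIndex ℤ (𝓞 K)) = Fintype.card (Fin 2) := by
    rw [← Module.finrank_eq_card_chooseBasisIndex, RingOfIntegers.rank, hdeg]; simp
  let bZ := (RingOfIntegers.basis K).reindex (Fintype.equivOfCardEq hcard)
  let c : Fin 2 → 𝓞 K := ![1, θ]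
  have h1 := Algebra.discr_of_matrix_vecMul (A := ℤ) bZ (bZ.toMatrix c)
  have h2 : (bZ : Fin 2 → 𝓞 K) = (⇑bZ) := rfl
  have h3 : Matrix.vecMul (⇑bZ) ((bZ.toMatrix c).map (algebraMap ℤ (𝓞 K))) = c := by
    ext j
    congr 1
    simp only [Matrix.vecMul, dotProduct, Matrix.map_apply]
    conv_rhs => rw [← bZ.sum_repr (c j)]
    simp [Module.Basis.toMatrix_apply, mul_comm]
  rw [h3, discr_eq_discr K bZ] at h1
  have h4 : Algebra.discr ℤ c = -(p : ℤ) := by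
    rw [Algebra.discr_def, Matrix.det_fin_two]
    simp only [Algebra.traceMatrix_apply, Algebra.traceForm_apply, c, Matrix.cons_val_zero,
      Matrix.cons_val_one, mul_one, one_mul, htr1, htrθ, htrθ2]
    have : (p : ℤ) + 1 = 4 * k := by exact_mod_cast hk
    linear_combination this
  rw [h4] at h1
  have h5 : p = ((bZ.toMatrix c).det.natAbs) ^ 2 * (discr K).natAbs := by
    have := congrArg Int.natAbs h1
    rw [Int.natAbs_neg, Int.natAbs_natCast, Int.natAbs_mul, Int.natAbs_pow] at this
    exact this
  set m := (bZ.toMatrix c).det.natAbs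
  have hm : m = 1 := by
    have hd : m * m ∣ p := ⟨(discr K).natAbs, by rw [← pow_two m]; exact h5⟩
    exact Nat.isUnit_iff.1 (hp.prime.irreducible.squarefree m hd)
  rw [hm] at h5
  omega

end KFacts

open NumberField Filter Topology nonZeroDivisors

section KFacts2
variable {p : ℕ} {K : Type*} [Field K] [NumberField K]

lemma kf_emb (hp : p.Prime) {r : K} (hr : r ^ 2 = -(p : K)) (φ : K →+* ℂ) :
    (φ r).re = 0 ∧ (φ r).im ^ 2 = p := by
  have h : (φ r) ^ 2 = -(p : ℂ) := by rw [← map_pow, hr]; simp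
  have h1 := congrArg Complex.re h
  have h2 := congrArg Complex.im h
  simp [pow_two] at h1 h2
  have hp0 : (0 : ℝ) < p := by exact_mod_cast hp.pos
  have : (φ r).re = 0 := by
    by_contra hne
    have : (φ r).im = 0 := by
      have : (φ r).re * (φ r).im = 0 := by linarith
      exact (mul_eq_zero.1 this).resolve_left hne
    rw [this] at h1
    nlinarith [mul_self_nonneg (φ r).re]
  refine ⟨this, ?_⟩
  rw [this] at h1
  nlinarith

lemma kf_totc (hp : p.Prime) {r : K} (hr : r ^ 2 = -(p : K)) : IsTotallyComplex K := by
  refine ⟨fun v => ?_⟩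
  rw [← InfinitePlace.not_isReal_iff_isComplex]
  intro hv
  have h := RingHom.congr_fun (InfinitePlace.isReal_iff.1 hv) r
  rw [ComplexEmbedding.conjugate_coe_eq] at h
  obtain ⟨h1, h2⟩ := kf_emb hp hr v.embedding
  have hp0 : (0 : ℝ) < p := by exact_mod_cast hp.pos
  have := congrArg Complex.im h
  simp at this
  have : (v.embedding r).im = 0 := by linarith
  rw [this] at h2
  nlinarith

lemma kf_nrc (hp : p.Prime) (hdeg : Module.finrank ℚ K = 2) {r : K} (hr : r ^ 2 = -(p : K)) :
    InfinitePlace.nrRealPlaces K = 0 ∧ InfinitePlace.nrComplexPlaces K = 1 ∧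
      Fintype.card (InfinitePlace K) = 1 := by
  have := kf_totc hp hr
  have h0 := IsTotallyComplex.nrRealPlaces_eq_zero K
  have h1 := InfinitePlace.card_add_two_mul_card_eq_rank K
  have h2 := InfinitePlace.card_eq_nrRealPlaces_add_nrComplexPlaces K
  omega

lemma kf_norm (hp : p.Prime) (hdeg : Module.finrank ℚ K = 2) {r : K} (hr : r ^ 2 = -(p : K))
    (φ : K →+* ℂ) (x : K) : ((|Algebra.norm ℚ x| : ℚ) : ℝ) = ‖φ x‖ ^ 2 := by
  have := kf_totc hp hr
  obtain ⟨h0, h1, h2⟩ := kf_nrc hp hdeg hr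
  haveI : Unique (InfinitePlace K) := by
    have : Subsingleton (InfinitePlace K) := Fintype.card_le_one_iff_subsingleton.1 h2.le
    exact uniqueOfSubsingleton (InfinitePlace.mk φ)
  rw [← InfinitePlace.prod_eq_abs_norm, Fintype.prod_unique, IsTotallyComplex.mult_eq]
  rw [Subsingleton.elim (default : InfinitePlace K) (InfinitePlace.mk φ)]
  rfl

lemma kf_reg (hp : p.Prime) (hdeg : Module.finrank ℚ K = 2) {r : K} (hr : r ^ 2 = -(p : K)) :
    Units.regulator K = 1 := by
  classical
  obtain ⟨h0, h1, h2⟩ := kf_nrc hp hdeg hr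
  rw [Units.regulator_eq_det']
  have : IsEmpty {w : InfinitePlace K // w ≠ Units.dirichletUnitTheorem.w₀} := by
    have : Subsingleton (InfinitePlace K) := Fintype.card_le_one_iff_subsingleton.1 h2.le
    exact ⟨fun w => w.2 (Subsingleton.elim _ _)⟩
  rw [Matrix.det_isEmpty, abs_one]

lemma kf_normform (hp : p.Prime) (hdeg : Module.finrank ℚ K = 2) {r : K} (hr : r ^ 2 = -(p : K))
    (a b : ℚ) : |Algebra.norm ℚ (algebraMap ℚ K a + algebraMap ℚ K b * r)| = a ^ 2 + p * b ^ 2 := by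
  have φ : K →+* ℂ := Classical.arbitrary _
  have h := kf_norm hp hdeg hr φ (algebraMap ℚ K a + algebraMap ℚ K b * r)
  obtain ⟨h1, h2⟩ := kf_emb hp hr φ
  have h3 : φ (algebraMap ℚ K a + algebraMap ℚ K b * r) = (a : ℂ) + b * φ r := by simp
  rw [h3, Complex.sq_norm, Complex.normSq_apply] at h
  have : (((|Algebra.norm ℚ (algebraMap ℚ K a + algebraMap ℚ K b * r)|) : ℚ) : ℝ)
      = ((a ^ 2 + p * b ^ 2 : ℚ) : ℝ) := by
    rw [h]; push_cast
    simp [h1]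
    rw [← h2]; ring
  exact_mod_cast this

lemma kf_nosq (hp : p.Prime) (m : ℕ) (hm0 : m ≠ 0) (hm : ¬ p ∣ m) (c : ℚ) : (p : ℚ) * c ^ 2 ≠ m := by
  intro h
  have : Fact p.Prime := ⟨hp⟩
  have hc : c ≠ 0 := by
    rintro rfl
    apply hm0
    have : ((m : ℕ) : ℚ) = 0 := by rw [← h]; ring
    exact_mod_cast this
  have hp0 : (p : ℚ) ≠ 0 := by exact_mod_cast hp.ne_zero
  have h1 := congrArg (padicValRat p) h
  rw [padicValRat.mul hp0 (pow_ne_zero _ hc), padicValRat.pow, padicValRat.self hp.one_lt,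
    padicValRat.of_nat, padicValNat.eq_zero_of_not_dvd hm] at h1
  push_cast at h1
  omega

lemma kf_units (hp : p.Prime) (hp3 : 3 < p) (hdeg : Module.finrank ℚ K = 2)
    {r : K} (hr : r ^ 2 = -(p : K)) (u : (𝓞 K)ˣ) : u = 1 ∨ u = -1 := by
  obtain ⟨a, b, hab⟩ := kf_repr hp hdeg hr ((u : 𝓞 K) : K)
  have hN : a ^ 2 + p * b ^ 2 = 1 := by
    rw [← kf_normform hp hdeg hr, ← hab]
    exact (NumberField.isUnit_iff_norm).1 u.isUnit
  have htr : ((Algebra.trace ℤ (𝓞 K) (u : 𝓞 K) : ℤ) : ℚ) = 2 * a := by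
    rw [Algebra.coe_trace_int, hab, map_add, Algebra.trace_algebraMap, hdeg, ← Algebra.smul_def,
      map_smul, kf_trace hp hdeg hr]
    simp
  set t := Algebra.trace ℤ (𝓞 K) (u : 𝓞 K)
  have h4 : (t : ℚ) ^ 2 + p * (2 * b) ^ 2 = 4 := by rw [htr]; linear_combination 4 * hN
  have hp0 : (0 : ℚ) < p := by exact_mod_cast hp.pos
  have ht : t ^ 2 ≤ 4 := by
    have : (t : ℚ) ^ 2 ≤ 4 := by nlinarith [mul_nonneg hp0.le (sq_nonneg (2 * b))]
    exact_mod_cast this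
  have ht1 : t ≤ 2 := by nlinarith
  have ht2 : -2 ≤ t := by nlinarith
  have hnd4 : ¬ p ∣ 4 := fun h => by
    have : p ∣ 2 ^ 2 := by simpa using h
    have := Nat.le_of_dvd (by norm_num) (hp.dvd_of_dvd_pow this)
    omega
  have hnd3 : ¬ p ∣ 3 := fun h => by
    have := Nat.le_of_dvd (by norm_num) h
    omega
  have key : ∀ e : ℚ, a = e → b = 0 → e ^ 2 = 1 → ((u : 𝓞 K) : K) = algebraMap ℚ K e := by
    intro e h1 h2 h3
    rw [hab, h1, h2]; simp
  have hcase : t = 2 ∨ t = -2 := by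
    have : t = -2 ∨ t = -1 ∨ t = 0 ∨ t = 1 ∨ t = 2 := by omega
    rcases this with h | h | h | h | h
    · exact Or.inr h
    · exfalso; apply kf_nosq hp 3 (by norm_num) hnd3 (2 * b); rw [h] at h4; push_cast at h4 ⊢; linarith
    · exfalso; apply kf_nosq hp 4 (by norm_num) hnd4 (2 * b); rw [h] at h4; push_cast at h4 ⊢; linarith
    · exfalso; apply kf_nosq hp 3 (by norm_num) hnd3 (2 * b); rw [h] at h4; push_cast at h4 ⊢; linarith
    · exact Or.inl h
  have hb : b = 0 := by
    have h5 : (t : ℚ) ^ 2 = 4 := by rcases hcase with h | h <;> rw [h] <;> norm_num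
    rw [h5] at h4
    have : (p : ℚ) * (2 * b) ^ 2 = 0 := by linarith
    have := (mul_eq_zero.1 this).resolve_left hp0.ne'
    have := pow_eq_zero_iff (two_ne_zero) |>.1 this
    linarith
  rcases hcase with h | h
  · left
    have ha : a = 1 := by rw [h] at htr; push_cast at htr; linarith
    apply Units.ext; apply RingOfIntegers.ext
    rw [hab, ha, hb]; simp
  · right
    have ha : a = -1 := by rw [h] at htr; push_cast at htr; linarith
    apply Units.ext; apply RingOfIntegers.ext
    rw [hab, ha, hb]; simp

lemma kf_tors (hp : p.Prime) (hp3 : 3 < p) (hdeg : Module.finrank ℚ K = 2)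
    {r : K} (hr : r ^ 2 = -(p : K)) : Units.torsionOrder K = 2 := by
  classical
  have h2 := Units.even_torsionOrder K
  have h3 := Units.torsionOrder_pos K
  have : Units.torsionOrder K ≤ 2 := by
    rw [Units.torsionOrder]
    have hinj : Function.Injective (fun x : Units.torsion K => decide ((x : (𝓞 K)ˣ) = 1)) := by
      intro x y hxy
      simp only [decide_eq_decide] at hxy
      apply Subtype.ext
      rcases kf_units hp hp3 hdeg hr (x : (𝓞 K)ˣ) with h | h
      · rw [h, hxy.1 h]
      · rcases kf_units hp hp3 hdeg hr (y : (𝓞 K)ˣ) with h' | h'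
        · rw [hxy.2 h', h']
        · rw [h, h']
    simpa using Nat.card_le_card_of_injective _ hinj
  obtain ⟨k, hk⟩ := h2
  omega

lemma kf_two (hdeg : Module.finrank ℚ K = 2) (P : Ideal (𝓞 K)) (hP : P.IsPrime)
    (h2 : (2 : 𝓞 K) ∈ P) : Ideal.absNorm P = 2 ∨ Ideal.absNorm P = 4 := by
  have h1 : Ideal.absNorm P ∣ 4 := by
    have : Ideal.absNorm P ∣ Ideal.absNorm (Ideal.span {(2 : 𝓞 K)}) :=
      Ideal.absNorm_dvd_absNorm_of_le ((Ideal.span_singleton_le_iff_mem _).2 h2)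
    rw [Ideal.absNorm_span_singleton] at this
    have h3 := Algebra.norm_algebraMap (R := ℤ) (S := 𝓞 K) 2
    rw [RingOfIntegers.rank, hdeg] at h3
    have h4 : (algebraMap ℤ (𝓞 K) 2) = 2 := by simp
    rw [h4] at h3
    rw [h3] at this
    simpa using this
  have h3 : Ideal.absNorm P ≠ 1 := fun h => hP.ne_top (Ideal.absNorm_eq_one_iff.1 h)
  have : Ideal.absNorm P ≤ 4 := Nat.le_of_dvd (by norm_num) h1
  interval_cases h : Ideal.absNorm P <;> omega

end KFacts2

open NumberField Filter Topology nonZeroDivisors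

section Lattice
variable {K : Type*} [Field K] [NumberField K]

lemma cg_gen (I J : (Ideal (𝓞 K))⁰) (h : ClassGroup.mk0 I * ClassGroup.mk0 J = 1) :
    ∃ g : 𝓞 K, g ≠ 0 ∧ (I : Ideal (𝓞 K)) * J = Ideal.span {g} := by
  rw [← map_mul] at h
  obtain ⟨g, hg⟩ := ((ClassGroup.mk0_eq_one_iff (I * J).2).1 h).principal
  refine ⟨g, ?_, hg⟩
  rintro rfl
  have : ((I * J : (Ideal (𝓞 K))⁰) : Ideal (𝓞 K)) = ⊥ := by rw [hg]; simp
  exact nonZeroDivisors.coe_ne_zero (I * J) this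

lemma cg_of_span (I J : (Ideal (𝓞 K))⁰) (g : 𝓞 K)
    (h : (I : Ideal (𝓞 K)) * J = Ideal.span {g}) : ClassGroup.mk0 I * ClassGroup.mk0 J = 1 := by
  rw [← map_mul, ClassGroup.mk0_eq_one_iff (I * J).2]
  exact ⟨g, h⟩

lemma span_eq_pm (hu : ∀ u : (𝓞 K)ˣ, u = 1 ∨ u = -1) (x y : 𝓞 K)
    (h : Ideal.span {x} = Ideal.span {y}) : x = y ∨ x = -y := by
  rw [Ideal.span_singleton_eq_span_singleton] at h
  obtain ⟨u, hu'⟩ := h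
  rcases hu u with rfl | rfl
  · left; simpa using hu'
  · right; rw [← hu']; simp

lemma absNorm_span_phi (φ : K →+* ℂ)
    (hφ : ∀ (φ : K →+* ℂ) (x : K), ((|Algebra.norm ℚ x| : ℚ) : ℝ) = ‖φ x‖ ^ 2) (x : 𝓞 K) :
    (Ideal.absNorm (Ideal.span {x}) : ℝ) = ‖φ x‖ ^ 2 := by
  rw [← hφ, Ideal.absNorm_span_singleton, ← Algebra.coe_norm_int]
  push_cast
  rw [Nat.cast_natAbs]; push_cast; rfl

lemma finite_phi (φ : K →+* ℂ)
    (hφ : ∀ (φ : K →+* ℂ) (x : K), ((|Algebra.norm ℚ x| : ℚ) : ℝ) = ‖φ x‖ ^ 2) (Y : ℝ) :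
    {x : 𝓞 K | ‖φ x‖ ^ 2 ≤ Y}.Finite := by
  have h := Embeddings.finite_of_norm_le K ℂ (Real.sqrt Y)
  refine Set.Finite.of_finite_image (f := fun x : 𝓞 K => (x : K)) (h.subset ?_)
    (RingOfIntegers.coe_injective.injOn)
  rintro _ ⟨x, hx, rfl⟩
  refine ⟨x.isIntegral_coe, fun ψ => ?_⟩
  apply Real.le_sqrt_of_sq_le
  rw [← hφ ψ, hφ φ]
  exact hx

noncomputable def cnt (φ : K →+* ℂ) (J : Ideal (𝓞 K)) (a : 𝓞 K) (Y : ℝ) : ℕ :=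
  Nat.card {x : 𝓞 K // x - a ∈ J ∧ ‖φ x‖ ^ 2 ≤ Y}

lemma cnt_lattice (hu : ∀ u : (𝓞 K)ˣ, u = 1 ∨ u = -1) (φ : K →+* ℂ)
    (hφ : ∀ (φ : K →+* ℂ) (x : K), ((|Algebra.norm ℚ x| : ℚ) : ℝ) = ‖φ x‖ ^ 2)
    (J : (Ideal (𝓞 K))⁰) (Y : ℝ) (hY : 0 ≤ Y) :
    cnt φ (J : Ideal (𝓞 K)) 0 Y = 1 + 2 * Nat.card {I : (Ideal (𝓞 K))⁰ //
        (Ideal.absNorm (I : Ideal (𝓞 K)) : ℝ) ≤ Y / Ideal.absNorm (J : Ideal (𝓞 K)) ∧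
          ClassGroup.mk0 I = (ClassGroup.mk0 J)⁻¹} := by
  classical
  have hJ0 : (0 : ℝ) < Ideal.absNorm (J : Ideal (𝓞 K)) := by
    have := nI_ge_one K J
    unfold nI at this
    linarith
  have hgen : ∀ I : {I : (Ideal (𝓞 K))⁰ //
        (Ideal.absNorm (I : Ideal (𝓞 K)) : ℝ) ≤ Y / Ideal.absNorm (J : Ideal (𝓞 K)) ∧
          ClassGroup.mk0 I = (ClassGroup.mk0 J)⁻¹}, ∃ g : 𝓞 K, g ≠ 0 ∧
          ((I : (Ideal (𝓞 K))⁰) : Ideal (𝓞 K)) * J = Ideal.span {g} := by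
    intro I
    apply cg_gen
    rw [I.2.2, inv_mul_cancel]
  choose g hg0 hg using hgen
  have hgY : ∀ I, ‖φ (g I)‖ ^ 2 ≤ Y := by
    intro I
    rw [← absNorm_span_phi φ hφ, ← hg, map_mul]
    push_cast
    have := I.2.1
    rwa [le_div_iff₀ hJ0] at this
  have hgJ : ∀ I, g I ∈ (J : Ideal (𝓞 K)) := by
    intro I
    apply Ideal.mul_le_right (I := ((I : (Ideal (𝓞 K))⁰) : Ideal (𝓞 K)))
    rw [hg]; exact Ideal.mem_span_singleton_self _
  have hb : ∀ m : ℕ, 1 + 2 * m = m * Nat.card Bool + 1 := by intro m; simp; ring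
  rw [cnt, hb, ← Nat.card_prod]
  have hfin : Finite {I : (Ideal (𝓞 K))⁰ //
        (Ideal.absNorm (I : Ideal (𝓞 K)) : ℝ) ≤ Y / Ideal.absNorm (J : Ideal (𝓞 K)) ∧
          ClassGroup.mk0 I = (ClassGroup.mk0 J)⁻¹} := by
    refine Set.Finite.subset (finite_nI_le K (Y / Ideal.absNorm (J : Ideal (𝓞 K)))) ?_
    intro I hI
    exact hI.1
  rw [← Finite.card_option]
  symm
  refine Nat.card_eq_of_bijective (fun o => match o with
    | none => ⟨0, by simpa using hY⟩
    | some (I, true) => ⟨g I, by simpa using ⟨hgJ I, hgY I⟩⟩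
    | some (I, false) => ⟨-g I, by simpa using ⟨hgJ I, hgY I⟩⟩) ⟨?_, ?_⟩
  · have hII : ∀ I I', Ideal.span {g I} = Ideal.span {g I'} → I = I' := by
      intro I I' h
      rw [← hg, ← hg] at h
      exact Subtype.ext (Subtype.ext (mul_right_cancel₀ (nonZeroDivisors.coe_ne_zero J) h))
    have hne : ∀ I I', g I ≠ - g I' := by
      intro I I' h
      have h1 : I = I' := by
        apply hII
        rw [h, Ideal.span_singleton_neg]
      subst h1
      exact hg0 I (self_eq_neg.1 h)
    rintro (_ | ⟨I, _ | _⟩) (_ | ⟨I', _ | _⟩) h <;> simp only [Subtype.mk.injEq] at h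
    · rfl
    · exact absurd (neg_eq_zero.1 h.symm) (hg0 _)
    · exact absurd h.symm (hg0 _)
    · exact absurd (neg_eq_zero.1 h) (hg0 _)
    · rw [hII I I' (by rw [neg_inj.1 h])]
    · exact absurd h.symm (hne _ _)
    · exact absurd h (hg0 _)
    · exact absurd h (hne _ _)
    · rw [hII I I' (by rw [h])]
  · rintro ⟨x, hx1, hx2⟩
    by_cases hx0 : x = 0
    · subst hx0; exact ⟨none, rfl⟩
    rw [sub_zero] at hx1
    obtain ⟨I, hI⟩ := Ideal.dvd_iff_le.2 ((Ideal.span_singleton_le_iff_mem _).2 hx1)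
    rw [mul_comm] at hI
    have hI0 : I ≠ 0 := by
      rintro rfl
      rw [zero_mul, Submodule.zero_eq_bot, Ideal.span_singleton_eq_bot] at hI
      exact hx0 hI
    have hmk := cg_of_span ⟨I, mem_nonZeroDivisors_of_ne_zero hI0⟩ J x hI.symm
    have hn : (Ideal.absNorm I : ℝ) ≤ Y / Ideal.absNorm (J : Ideal (𝓞 K)) := by
      rw [le_div_iff₀ hJ0]
      rw [← absNorm_span_phi φ hφ, hI, map_mul] at hx2
      exact_mod_cast hx2
    let II : {I : (Ideal (𝓞 K))⁰ //
        (Ideal.absNorm (I : Ideal (𝓞 K)) : ℝ) ≤ Y / Ideal.absNorm (J : Ideal (𝓞 K)) ∧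
          ClassGroup.mk0 I = (ClassGroup.mk0 J)⁻¹} :=
      ⟨⟨I, mem_nonZeroDivisors_of_ne_zero hI0⟩, hn, eq_inv_of_mul_eq_one_left hmk⟩
    have := hg II
    have h2 : Ideal.span {x} = Ideal.span {g II} := by rw [← this]; exact hI
    rcases span_eq_pm hu _ _ h2 with h | h
    · exact ⟨some (II, true), Subtype.ext h.symm⟩
    · exact ⟨some (II, false), Subtype.ext h.symm⟩

lemma cnt_finite (φ : K →+* ℂ)
    (hφ : ∀ (φ : K →+* ℂ) (x : K), ((|Algebra.norm ℚ x| : ℚ) : ℝ) = ‖φ x‖ ^ 2)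
    (J : Ideal (𝓞 K)) (a : 𝓞 K) (Y : ℝ) :
    Finite {x : 𝓞 K // x - a ∈ J ∧ ‖φ x‖ ^ 2 ≤ Y} :=
  (finite_phi φ hφ Y).subset fun _ hx => hx.2

lemma cnt_shift (φ : K →+* ℂ)
    (hφ : ∀ (φ : K →+* ℂ) (x : K), ((|Algebra.norm ℚ x| : ℚ) : ℝ) = ‖φ x‖ ^ 2)
    (J : Ideal (𝓞 K)) (a b : 𝓞 K) (Y : ℝ) :
    cnt φ J a Y ≤ cnt φ J b ((Real.sqrt Y + ‖φ (a - b)‖) ^ 2) := by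
  have := cnt_finite φ hφ J b ((Real.sqrt Y + ‖φ (a - b)‖) ^ 2)
  refine Nat.card_le_card_of_injective
    (fun x => ⟨x.1 - (a - b), by simpa [sub_sub] using x.2.1, ?_⟩) ?_
  · gcongr
    have h1 : ‖φ x.1‖ ≤ Real.sqrt Y := Real.le_sqrt_of_sq_le x.2.2
    have h2 : ‖φ ((x.1 - (a - b) : 𝓞 K) : K)‖ ≤ ‖φ x.1‖ + ‖φ (a - b)‖ := by
      have : φ ((x.1 - (a - b) : 𝓞 K) : K) = φ x.1 - φ (a - b) := by
        rw [← map_sub]; simp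
      rw [this]
      exact norm_sub_le _ _
    linarith
  · intro x y h
    simpa [Subtype.ext_iff] using h

lemma cnt_mono (φ : K →+* ℂ)
    (hφ : ∀ (φ : K →+* ℂ) (x : K), ((|Algebra.norm ℚ x| : ℚ) : ℝ) = ‖φ x‖ ^ 2)
    (J : Ideal (𝓞 K)) (a : 𝓞 K) : Monotone (cnt φ J a) := by
  intro Y Z hYZ
  have := cnt_finite φ hφ J a Z
  exact Nat.card_le_card_of_injective (fun x => ⟨x.1, x.2.1, x.2.2.trans hYZ⟩)
    (fun x y h => by simpa [Subtype.ext_iff] using h)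

lemma cnt_lim (hu : ∀ u : (𝓞 K)ˣ, u = 1 ∨ u = -1) (φ : K →+* ℂ)
    (hφ : ∀ (φ : K →+* ℂ) (x : K), ((|Algebra.norm ℚ x| : ℚ) : ℝ) = ‖φ x‖ ^ 2)
    (ρ : ℝ) (hρ : ∀ C : ClassGroup (𝓞 K), Tendsto (fun s : ℝ ↦
      (Nat.card {I : (Ideal (𝓞 K))⁰ //
        (Ideal.absNorm (I : Ideal (𝓞 K)) : ℝ) ≤ s ∧ ClassGroup.mk0 I = C} : ℝ) / s) atTop (𝓝 ρ))
    (J : (Ideal (𝓞 K))⁰) (a : 𝓞 K) :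
    Tendsto (fun Y : ℝ => (cnt φ (J : Ideal (𝓞 K)) a Y : ℝ) / Y) atTop
      (𝓝 (2 * ρ / Ideal.absNorm (J : Ideal (𝓞 K)))) := by
  have hJ0 : (0 : ℝ) < Ideal.absNorm (J : Ideal (𝓞 K)) := by
    have := nI_ge_one K J
    unfold nI at this
    linarith
  set N : ℝ := (Ideal.absNorm (J : Ideal (𝓞 K)) : ℝ)
  have h0 : Tendsto (fun Y : ℝ => (cnt φ (J : Ideal (𝓞 K)) 0 Y : ℝ) / Y) atTop (𝓝 (2 * ρ / N)) := by
    have h1 := (hρ (ClassGroup.mk0 J)⁻¹).comp (tendsto_id.atTop_div_const hJ0)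
    have h2 : Tendsto (fun Y : ℝ => Y⁻¹) atTop (𝓝 0) := tendsto_inv_atTop_zero
    have h3 := h2.add (h1.const_mul (2 / N))
    rw [zero_add, div_mul_eq_mul_div] at h3
    refine h3.congr' ?_
    filter_upwards [eventually_gt_atTop 0] with Y hY
    rw [cnt_lattice hu φ hφ J Y hY.le]
    simp only [Function.comp, id]
    push_cast
    generalize (Nat.card {I : (Ideal (𝓞 K))⁰ // _} : ℝ) = M
    field_simp
  set α := ‖φ (a : K)‖
  have hs : ∀ β : ℝ, Tendsto (fun Y : ℝ => (Real.sqrt Y + β) ^ 2 / Y) atTop (𝓝 1) := by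
    intro β
    have h1 : Tendsto (fun Y : ℝ => (Real.sqrt Y)⁻¹) atTop (𝓝 0) :=
      tendsto_inv_atTop_zero.comp Real.tendsto_sqrt_atTop
    have h2 := ((h1.const_mul β).const_add 1).pow 2
    simp only [mul_zero, add_zero, one_pow] at h2
    refine h2.congr' ?_
    filter_upwards [eventually_gt_atTop 0] with Y hY
    have hq : Real.sqrt Y ^ 2 = Y := Real.sq_sqrt hY.le
    have hq0 : 0 < Real.sqrt Y := Real.sqrt_pos.2 hY
    conv_rhs => rw [← hq]
    rw [Real.sqrt_sq hq0.le, ← div_pow]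
    congr 1
    field_simp
  have hinf : ∀ β : ℝ, Tendsto (fun Y : ℝ => (Real.sqrt Y + β) ^ 2) atTop atTop := by
    intro β
    exact (tendsto_pow_atTop (two_ne_zero)).comp
      (tendsto_atTop_add_const_right _ _ Real.tendsto_sqrt_atTop)
  have hgo : ∀ β : ℝ, Tendsto (fun Y : ℝ =>
      (cnt φ (J : Ideal (𝓞 K)) 0 ((Real.sqrt Y + β) ^ 2) : ℝ) / Y) atTop (𝓝 (2 * ρ / N)) := by
    intro β
    have h1 := (h0.comp (hinf β)).mul (hs β)
    rw [mul_one] at h1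
    refine h1.congr' ?_
    filter_upwards [(hinf β).eventually_gt_atTop 0] with Y hY
    simp only [Function.comp]
    rw [div_mul_div_cancel₀ hY.ne']
  refine tendsto_of_tendsto_of_tendsto_of_le_of_le' (hgo (-α)) (hgo α) ?_ ?_
  · filter_upwards [Real.tendsto_sqrt_atTop.eventually_ge_atTop α, eventually_gt_atTop 0] with Y h1 h2
    gcongr
    have h := cnt_shift φ hφ (J : Ideal (𝓞 K)) 0 a ((Real.sqrt Y + -α) ^ 2)
    rw [Real.sqrt_sq (by linarith)] at h
    have hα : ‖φ (((0 : 𝓞 K) : K) - a)‖ = α := by simp [α]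
    rw [hα] at h
    have h3 : (Real.sqrt Y + -α + α) ^ 2 = Y := by
      rw [neg_add_cancel_right, Real.sq_sqrt h2.le]
    rwa [h3] at h
  · filter_upwards [eventually_gt_atTop 0] with Y h2
    gcongr
    have h := cnt_shift φ hφ (J : Ideal (𝓞 K)) a 0 Y
    simpa [α] using h

end Lattice

open NumberField Filter Topology nonZeroDivisors

section LemA
variable {K L : Type*} [Field K] [NumberField K] [Field L] [NumberField L] [Algebra K L]

lemma quad_sigma (h : Module.finrank K L = 2) : ∃ σ : L ≃ₐ[K] L, (∀ x, σ (σ x) = x) ∧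
    (∀ x, σ x = x → ∃ a : K, algebraMap K L a = x) ∧
    (∀ x, algebraMap K L (Algebra.trace K L x) = x + σ x) ∧ (∃ x, σ x ≠ x) := by
  have : Algebra.IsQuadraticExtension K L := ⟨h⟩
  have hG : IsGalois K L := inferInstance
  have hc : Nat.card (L ≃ₐ[K] L) = 2 := by rw [IsGalois.card_aut_eq_finrank, h]
  obtain ⟨σ, hσ⟩ : ∃ σ : L ≃ₐ[K] L, σ ≠ 1 := by
    have : Nontrivial (L ≃ₐ[K] L) := by
      rw [← Finite.one_lt_card_iff_nontrivial, hc]; norm_num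
    exact exists_ne 1
  have huniv : ∀ τ : L ≃ₐ[K] L, τ = 1 ∨ τ = σ := by
    intro τ
    by_contra hcon
    push Not at hcon
    have h3 : Function.Injective ![1, σ, τ] := by
      intro i j hij
      fin_cases i <;> fin_cases j <;> simp_all [eq_comm]
    have := Nat.card_le_card_of_injective _ h3
    rw [hc] at this
    simp at this
  have hσσ : ∀ x, σ (σ x) = x := by
    intro x
    have : σ * σ = 1 := by
      rcases huniv (σ * σ) with h | h
      · exact h
      · exact absurd (mul_eq_left.1 h) hσ
    exact DFunLike.congr_fun this x
  refine ⟨σ, hσσ, ?_, ?_, ?_⟩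
  · intro x hx
    have := (IsGalois.mem_bot_iff_fixed (F := K) (E := L) x).2 (by
      intro τ
      rcases huniv τ with rfl | rfl
      · rfl
      · exact hx)
    exact IntermediateField.mem_bot.1 this
  · intro x
    classical
    rw [trace_eq_sum_automorphisms]
    have : (Finset.univ : Finset (L ≃ₐ[K] L)) = {1, σ} := by
      ext τ; simpa using huniv τ
    rw [this, Finset.sum_pair hσ.symm]
    rfl
  · by_contra hcon
    push Not at hcon
    exact hσ (AlgEquiv.ext hcon)

lemma diff_eq (σ : L ≃ₐ[K] L) (hσσ : ∀ x, σ (σ x) = x)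
    (htr : ∀ x, algebraMap K L (Algebra.trace K L x) = x + σ x) (s : L) (hs0 : s ≠ 0)
    (hs : σ s = -s) (I : Ideal (𝓞 K)) (hI0 : I ≠ ⊥)
    (hI1 : ∀ x : 𝓞 L, ∃ β ∈ I, (x : L) - σ x = algebraMap K L β * s)
    (hI2 : ∀ β ∈ I, ∃ x : 𝓞 L, (x : L) - σ x = algebraMap K L (β : K) * s) :
    (differentIdeal (𝓞 K) (𝓞 L) : FractionalIdeal (𝓞 L)⁰ L) =
      FractionalIdeal.spanSingleton (𝓞 L)⁰ s * ((I.map (algebraMap (𝓞 K) (𝓞 L)) : Ideal (𝓞 L)) :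
        FractionalIdeal (𝓞 L)⁰ L) := by
  set J := FractionalIdeal.spanSingleton (𝓞 L)⁰ s * ((I.map (algebraMap (𝓞 K) (𝓞 L)) : Ideal (𝓞 L)) :
        FractionalIdeal (𝓞 L)⁰ L) with hJ
  have hmap0 : I.map (algebraMap (𝓞 K) (𝓞 L)) ≠ ⊥ := by
    rw [Ne, Ideal.map_eq_bot_iff_of_injective (FaithfulSMul.algebraMap_injective _ _)]
    exact hI0
  have hJ0 : J ≠ 0 := by
    refine mul_ne_zero (FractionalIdeal.spanSingleton_ne_zero_iff.2 hs0) ?_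
    exact FractionalIdeal.coeIdeal_ne_zero.2 hmap0
  have hone : (1 : FractionalIdeal (𝓞 L)⁰ L) ≠ 0 := one_ne_zero
  have hint : ∀ x : 𝓞 L, IsIntegral ℤ (σ (x : L)) := fun x =>
    (x.isIntegral_coe).map (σ.toAlgHom.restrictScalars ℤ)
  have halg : ∀ β : 𝓞 K, ((algebraMap (𝓞 K) (𝓞 L) β : 𝓞 L) : L) = algebraMap K L (β : K) := fun β => rfl
  rw [coeIdeal_differentIdeal (𝓞 K) K L (𝓞 L), inv_eq_iff_eq_inv]
  apply le_antisymm
  · intro y hy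
    rw [FractionalIdeal.mem_inv_iff hJ0]
    intro z hz
    obtain ⟨z', hz', rfl⟩ := (FractionalIdeal.mem_singleton_mul).1 hz
    obtain ⟨w, hw, rfl⟩ := (FractionalIdeal.mem_coeIdeal (𝓞 L)⁰).1 hz'
    have key : ∀ β ∈ I, y * (s * algebraMap K L (β : K)) ∈ (1 : FractionalIdeal (𝓞 L)⁰ L) := by
      intro β hβ
      obtain ⟨x, hx⟩ := hI2 β hβ
      rw [mul_comm s, ← hx]
      have h1 := (FractionalIdeal.mem_dual hone).1 hy 1 (FractionalIdeal.one_mem_one _)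
      have h2 := (FractionalIdeal.mem_dual hone).1 hy (x : L)
        ((FractionalIdeal.mem_one_iff _).2 ⟨x, rfl⟩)
      obtain ⟨a, ha⟩ := h1
      obtain ⟨b, hb⟩ := h2
      rw [Algebra.traceForm_apply] at ha hb
      have ha' := congrArg (algebraMap K L) ha
      have hb' := congrArg (algebraMap K L) hb
      rw [htr] at ha' hb'
      rw [map_mul] at ha' hb'
      rw [map_one, mul_one, mul_one] at ha'
      rw [FractionalIdeal.mem_one_iff]
      refine ⟨algebraMap (𝓞 K) (𝓞 L) b - ⟨σ (x : L), hint x⟩ * algebraMap (𝓞 K) (𝓞 L) a, ?_⟩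
      change algebraMap K L (algebraMap (𝓞 K) K b) - σ (x : L) * algebraMap K L (algebraMap (𝓞 K) K a) = _
      rw [ha', hb']
      ring
    clear hz hz'
    rw [Ideal.map] at hw
    induction hw using Submodule.span_induction with
    | mem w hw =>
      obtain ⟨β, hβ, rfl⟩ := hw
      exact key β hβ
    | zero => simp
    | add u v _ _ hu hv =>
      rw [map_add, mul_add, mul_add]
      obtain ⟨u', hu'⟩ := (FractionalIdeal.mem_one_iff _).1 hu
      obtain ⟨v', hv'⟩ := (FractionalIdeal.mem_one_iff _).1 hv
      exact (FractionalIdeal.mem_one_iff _).2 ⟨u' + v', by rw [map_add, hu', hv']⟩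
    | smul c u _ hu =>
      rw [smul_eq_mul, map_mul]
      have : y * (s * (algebraMap (𝓞 L) L c * algebraMap (𝓞 L) L u)) =
        c • (y * (s * algebraMap (𝓞 L) L u)) := by
        rw [Algebra.smul_def]; ring
      rw [this]
      exact Submodule.smul_mem _ _ hu
  · intro v0 hv0
    rw [FractionalIdeal.mem_dual hone]
    intro a ha
    obtain ⟨a, rfl⟩ := (FractionalIdeal.mem_one_iff _).1 ha
    rw [Algebra.traceForm_apply]
    have hv : v0 * algebraMap (𝓞 L) L a ∈ J⁻¹ := by
      rw [mul_comm, ← Algebra.smul_def]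
      exact Submodule.smul_mem _ _ hv0
    generalize v0 * algebraMap (𝓞 L) L a = v at hv
    rw [FractionalIdeal.mem_inv_iff hJ0] at hv
    have hτ : ∀ β ∈ I, ∃ γ ∈ I, (γ : K) = Algebra.trace K L v * (β : K) := by
      intro β hβ
      have h1 : s * algebraMap K L (β : K) ∈ J := by
        refine FractionalIdeal.mem_singleton_mul.2 ⟨_, (FractionalIdeal.mem_coeIdeal (𝓞 L)⁰).2
          ⟨algebraMap (𝓞 K) (𝓞 L) β, Ideal.mem_map_of_mem _ hβ, rfl⟩, rfl⟩
      obtain ⟨w, hw⟩ := (FractionalIdeal.mem_one_iff _).1 (hv _ h1)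
      obtain ⟨γ, hγ, hγ'⟩ := hI1 w
      refine ⟨γ, hγ, ?_⟩
      apply (algebraMap K L).injective
      apply mul_right_cancel₀ hs0
      rw [← hγ', map_mul, htr]
      change algebraMap (𝓞 L) L w - σ (algebraMap (𝓞 L) L w) = _
      rw [hw, map_mul, map_mul, hs, AlgEquiv.commutes]
      ring
    have hle : FractionalIdeal.spanSingleton (𝓞 K)⁰ (Algebra.trace K L v) *
        (I : FractionalIdeal (𝓞 K)⁰ K) ≤ I := by
      intro z hz
      obtain ⟨z', hz', rfl⟩ := FractionalIdeal.mem_singleton_mul.1 hz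
      obtain ⟨β, hβ, rfl⟩ := (FractionalIdeal.mem_coeIdeal (𝓞 K)⁰).1 hz'
      obtain ⟨γ, hγ, hγ'⟩ := hτ β hβ
      exact (FractionalIdeal.mem_coeIdeal (𝓞 K)⁰).2 ⟨γ, hγ, hγ'⟩
    have hIf : (I : FractionalIdeal (𝓞 K)⁰ K) ≠ 0 := FractionalIdeal.coeIdeal_ne_zero.2 hI0
    have h2 := mul_le_mul_left hle (I : FractionalIdeal (𝓞 K)⁰ K)⁻¹
    rw [mul_assoc, mul_inv_cancel₀ hIf, mul_one] at h2
    have h3 := h2 (FractionalIdeal.mem_spanSingleton_self _ _)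
    obtain ⟨b, hb⟩ := (FractionalIdeal.mem_one_iff _).1 h3
    exact ⟨b, hb⟩

end LemA

open NumberField Filter Topology nonZeroDivisors

structure QD (K L : Type*) [Field K] [NumberField K] [Field L] [NumberField L] [Algebra K L] where
  σ : L ≃ₐ[K] L
  hσσ : ∀ x, σ (σ x) = x
  hfix : ∀ x, σ x = x → ∃ a : K, algebraMap K L a = x
  s : L
  hs0 : s ≠ 0
  hs : σ s = -s
  δ : K
  hδ : s ^ 2 = algebraMap K L δ
  I : Ideal (𝓞 K)
  hI0 : I ≠ ⊥
  hI1 : ∀ x : 𝓞 L, ∃ β ∈ I, (x : L) - σ x = algebraMap K L β * s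
  hI2 : ∀ β ∈ I, ∃ x : 𝓞 L, (x : L) - σ x = algebraMap K L (β : K) * s
  hd : ((discr L).natAbs : ℚ) = ((discr K).natAbs : ℚ) ^ 2 * |Algebra.norm ℚ δ| *
    (Ideal.absNorm I : ℚ) ^ 2

section LemA2
variable {K L : Type*} [Field K] [NumberField K] [Field L] [NumberField L] [Algebra K L]

lemma norm_sq_root (h : Module.finrank K L = 2) (s : L) (δ : K) (hδ : s ^ 2 = algebraMap K L δ) :
    |Algebra.norm ℚ s| = |Algebra.norm ℚ δ| := by
  have h1 : Algebra.norm ℚ (algebraMap K L δ) = Algebra.norm ℚ δ ^ 2 := by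
    rw [← Algebra.norm_norm (S := K), Algebra.norm_algebraMap, h, map_pow]
  rw [← hδ, map_pow] at h1
  exact sq_eq_sq_iff_abs_eq_abs _ _ |>.1 h1

theorem qd_nonempty (h : Module.finrank K L = 2) : Nonempty (QD K L) := by
  obtain ⟨σ, hσσ, hfix, htr, x1, hx1⟩ := quad_sigma h
  have hint : ∀ x : 𝓞 L, IsIntegral ℤ (σ (x : L)) := fun x =>
    (x.isIntegral_coe).map (σ.toAlgHom.restrictScalars ℤ)
  obtain ⟨x0, hx0⟩ : ∃ x0 : 𝓞 L, σ (x0 : L) ≠ x0 := by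
    by_contra hcon
    push Not at hcon
    obtain ⟨a, b, hb, hab⟩ := IsFractionRing.div_surjective (A := 𝓞 L) x1
    apply hx1
    rw [← hab, map_div₀]
    have h1 := hcon a
    have h2 := hcon b
    change σ (algebraMap (𝓞 L) L a) / σ (algebraMap (𝓞 L) L b) = _
    rw [h1, h2]
  let s0 : L := x0 - σ x0
  have hs00 : s0 ≠ 0 := sub_ne_zero.2 hx0.symm
  have hs0σ : σ s0 = - s0 := by simp [s0, hσσ]
  have hs0i : IsIntegral ℤ s0 := x0.isIntegral_coe.sub (hint x0)
  let s : L := s0⁻¹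
  have hs0 : s ≠ 0 := inv_ne_zero hs00
  have hs : σ s = -s := by simp only [s, map_inv₀, hs0σ, inv_neg]
  obtain ⟨δ, hδ⟩ := hfix (s ^ 2) (by rw [map_pow, hs, neg_sq])
  have hall : ∀ x : 𝓞 L, ∃ β : 𝓞 K, (x : L) - σ x = algebraMap K L β * s := by
    intro x
    obtain ⟨b, hb⟩ := hfix (((x : L) - σ x) * s0) (by
      rw [map_mul, map_sub, hσσ, hs0σ]; ring)
    have hbi : IsIntegral ℤ b := by
      have : IsIntegral ℤ (algebraMap K L b) := by
        rw [hb]; exact (x.isIntegral_coe.sub (hint x)).mul hs0i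
      exact (isIntegral_algebraMap_iff (algebraMap K L).injective).1 this
    refine ⟨⟨b, hbi⟩, ?_⟩
    change _ = algebraMap K L b * s
    rw [hb, mul_assoc, mul_inv_cancel₀ hs00, mul_one]
  let I : Ideal (𝓞 K) :=
    { carrier := {β | ∃ x : 𝓞 L, (x : L) - σ x = algebraMap K L (β : K) * s}
      zero_mem' := ⟨0, by simp⟩
      add_mem' := by
        rintro a b ⟨x, hx⟩ ⟨y, hy⟩
        refine ⟨x + y, ?_⟩
        simp only [map_add]
        linear_combination hx + hy
      smul_mem' := by
        rintro c b ⟨x, hx⟩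
        refine ⟨algebraMap (𝓞 K) (𝓞 L) c * x, ?_⟩
        change algebraMap K L (c : K) * (x : L) - σ (algebraMap K L (c : K) * (x : L)) = algebraMap K L ((c : K) * (b : K)) * s
        rw [map_mul, map_mul, AlgEquiv.commutes]
        linear_combination algebraMap K L (c : K) * hx }
  have hI1 : ∀ x : 𝓞 L, ∃ β ∈ I, (x : L) - σ x = algebraMap K L (β : K) * s := by
    intro x
    obtain ⟨β, hβ⟩ := hall x
    exact ⟨β, ⟨x, hβ⟩, hβ⟩
  have hI2 : ∀ β ∈ I, ∃ x : 𝓞 L, (x : L) - σ x = algebraMap K L (β : K) * s := fun β hβ => hβ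
  have hI0 : I ≠ ⊥ := by
    intro hbot
    obtain ⟨β, hβ, hβ'⟩ := hI1 x0
    rw [hbot, Ideal.mem_bot] at hβ
    rw [hβ] at hβ'
    apply hs00
    simpa [s0] using hβ'
  refine ⟨⟨σ, hσσ, hfix, s, hs0, hs, δ, hδ.symm, I, hI0, hI1, hI2, ?_⟩⟩
  have hD := diff_eq σ hσσ htr s hs0 hs I hI0 hI1 hI2
  have h1 := congrArg FractionalIdeal.absNorm hD
  rw [map_mul, FractionalIdeal.coeIdeal_absNorm, FractionalIdeal.coeIdeal_absNorm,
    FractionalIdeal.absNorm_span_singleton, Ideal.absNorm_algebraMap,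
    ← IsFractionRing.finrank_eq (𝓞 K) K (𝓞 L) L, h, norm_sq_root h s δ hδ.symm] at h1
  rw [natAbs_discr_eq_absNorm_differentIdeal_mul_natAbs_discr_pow K (𝓞 K) L (𝓞 L), h]
  push_cast at h1 ⊢
  rw [h1]; ring

end LemA2

open NumberField Filter Topology nonZeroDivisors

section LemB
variable {K L : Type*} [Field K] [NumberField K] [Field L] [NumberField L] [Algebra K L]

lemma mem_of_inv (q A : Ideal (𝓞 K)) (hq : q ≠ ⊥) (a : K)
    (h : ∀ z ∈ (q : FractionalIdeal (𝓞 K)⁰ K)⁻¹, ∃ c ∈ A, (c : K) = z * a) :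
    ∃ c ∈ A * q, (c : K) = a := by
  have hqf : (q : FractionalIdeal (𝓞 K)⁰ K) ≠ 0 := FractionalIdeal.coeIdeal_ne_zero.2 hq
  have hle : FractionalIdeal.spanSingleton (𝓞 K)⁰ a * (q : FractionalIdeal (𝓞 K)⁰ K)⁻¹ ≤ A := by
    intro z hz
    obtain ⟨z', hz', rfl⟩ := FractionalIdeal.mem_singleton_mul.1 hz
    obtain ⟨c, hc, hc'⟩ := h z' hz'
    exact (FractionalIdeal.mem_coeIdeal (𝓞 K)⁰).2 ⟨c, hc, by rw [mul_comm]; exact hc'⟩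
  have h2 := mul_le_mul_left hle (q : FractionalIdeal (𝓞 K)⁰ K)
  rw [mul_assoc, inv_mul_cancel₀ hqf, mul_one, ← FractionalIdeal.coeIdeal_mul] at h2
  have h3 := h2 (FractionalIdeal.mem_spanSingleton_self _ _)
  obtain ⟨c, hc, hc'⟩ := (FractionalIdeal.mem_coeIdeal (𝓞 K)⁰).1 h3
  exact ⟨c, hc, hc'⟩

lemma inv_mul_int (q : Ideal (𝓞 K)) (hq : q ≠ ⊥) (z : K)
    (hz : z ∈ (q : FractionalIdeal (𝓞 K)⁰ K)⁻¹) (t : 𝓞 K) (ht : t ∈ q) :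
    ∃ c : 𝓞 K, (c : K) = z * t := by
  have hqf : (q : FractionalIdeal (𝓞 K)⁰ K) ≠ 0 := FractionalIdeal.coeIdeal_ne_zero.2 hq
  have := (FractionalIdeal.mem_inv_iff hqf).1 hz t ((FractionalIdeal.mem_coeIdeal (𝓞 K)⁰).2 ⟨t, ht, rfl⟩)
  exact (FractionalIdeal.mem_one_iff _).1 this

lemma inv_mul_int2 (q : Ideal (𝓞 K)) (hq : q ≠ ⊥) (z : K)
    (hz : z ∈ (q : FractionalIdeal (𝓞 K)⁰ K)⁻¹) (e : 𝓞 K) (he : e ∈ q ^ 2) :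
    ∃ c : 𝓞 K, (c : K) = z ^ 2 * e := by
  have hqf : (q : FractionalIdeal (𝓞 K)⁰ K) ≠ 0 := FractionalIdeal.coeIdeal_ne_zero.2 hq
  have h1 := FractionalIdeal.mul_mem_mul hz hz
  have h2 : (e : K) ∈ ((q ^ 2 : Ideal (𝓞 K)) : FractionalIdeal (𝓞 K)⁰ K) :=
    (FractionalIdeal.mem_coeIdeal (𝓞 K)⁰).2 ⟨e, he, rfl⟩
  have h3 := FractionalIdeal.mul_mem_mul h1 h2
  rw [FractionalIdeal.coeIdeal_pow] at h3
  have h4 : (q : FractionalIdeal (𝓞 K)⁰ K)⁻¹ * (q : FractionalIdeal (𝓞 K)⁰ K)⁻¹ *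
      (q : FractionalIdeal (𝓞 K)⁰ K) ^ 2 = 1 := by
    field_simp
  rw [h4] at h3
  rw [pow_two]
  exact (FractionalIdeal.mem_one_iff _).1 h3

lemma lemB (Q : QD K L) (q : Ideal (𝓞 K)) (hq : q ≠ ⊥) (D : 𝓞 K) (b : K)
    (hD : (D : K) = Q.δ * b ^ 2) :
    (∃ t ∈ q, D - t ^ 2 ∈ Ideal.span {4} * q ^ 2) ↔ ∃ c ∈ Q.I * q, (c : K) = b := by
  have hσi : ∀ x : L, IsIntegral ℤ x → IsIntegral ℤ (Q.σ x) := fun x hx =>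
    hx.map (Q.σ.toAlgHom.restrictScalars ℤ)
  have hdesc : ∀ a : K, IsIntegral ℤ (algebraMap K L a) → IsIntegral ℤ a := fun a ha =>
    (isIntegral_algebraMap_iff (algebraMap K L).injective).1 ha
  have hDL : algebraMap K L (D : K) = (algebraMap K L b * Q.s) ^ 2 := by
    rw [hD, mul_pow, Q.hδ, map_mul, map_pow]; ring
  have h4 : algebraMap K L (algebraMap (𝓞 K) K 4) = 4 :=
    map_ofNat ((algebraMap K L).comp (algebraMap (𝓞 K) K)) 4
  constructor
  · rintro ⟨t, ht, htD⟩
    obtain ⟨e, he, hee⟩ := Ideal.mem_span_singleton_mul.1 htD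
    apply mem_of_inv q Q.I hq
    intro z hz
    obtain ⟨c1, hc1⟩ := inv_mul_int q hq z hz t ht
    obtain ⟨c2, hc2⟩ := inv_mul_int2 q hq z hz e he
    set x : L := (algebraMap K L (t : K) + algebraMap K L b * Q.s) / 2 with hx
    have heL : algebraMap K L (D : K) - algebraMap K L (t : K) ^ 2 = 4 * algebraMap K L (e : K) := by
      have := congrArg (fun y : 𝓞 K => algebraMap K L (y : K)) hee
      simp only [map_sub, map_mul, map_pow] at this
      rw [← this, h4]
    have hxx : x ^ 2 - algebraMap K L (t : K) * x - algebraMap K L (e : K) = 0 := by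
      rw [hDL] at heL
      rw [hx]
      field_simp
      linear_combination heL
    have hzx : IsIntegral ℤ (algebraMap K L z * x) := by
      have h1 : IsIntegral (𝓞 K) (algebraMap K L z * x) := by
        refine ⟨Polynomial.X ^ 2 - Polynomial.C c1 * Polynomial.X - Polynomial.C c2, ?_, ?_⟩
        · monicity!
        · simp only [Polynomial.eval₂_sub, Polynomial.eval₂_pow, Polynomial.eval₂_X,
            Polynomial.eval₂_mul, Polynomial.eval₂_C]
          have e1 : algebraMap (𝓞 K) L c1 = algebraMap K L z * algebraMap K L (t : K) := by
            rw [← map_mul, ← hc1]; rfl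
          have e2 : algebraMap (𝓞 K) L c2 = algebraMap K L z ^ 2 * algebraMap K L (e : K) := by
            rw [← map_pow, ← map_mul, ← hc2]; rfl
          rw [e1, e2]
          linear_combination algebraMap K L z ^ 2 * hxx
      exact isIntegral_trans _ h1
    obtain ⟨β, hβ, hβ'⟩ := Q.hI1 ⟨_, hzx⟩
    refine ⟨β, hβ, ?_⟩
    apply (algebraMap K L).injective
    apply mul_right_cancel₀ Q.hs0
    rw [← hβ']
    change algebraMap K L z * x - Q.σ (algebraMap K L z * x) = _
    rw [hx]
    simp only [map_mul, map_div₀, map_add, AlgEquiv.commutes, Q.hs, map_ofNat]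
    ring
  · rintro ⟨c, hc, hcb⟩
    obtain ⟨y, hy, hyc⟩ : ∃ y : L, (∀ z ∈ (q : FractionalIdeal (𝓞 K)⁰ K)⁻¹,
        IsIntegral ℤ (algebraMap K L z * y)) ∧ y - Q.σ y = algebraMap K L (c : K) * Q.s := by
      clear hcb
      refine Submodule.mul_induction_on (C := fun c : 𝓞 K => ∃ y : L,
        (∀ z ∈ (q : FractionalIdeal (𝓞 K)⁰ K)⁻¹, IsIntegral ℤ (algebraMap K L z * y)) ∧
          y - Q.σ y = algebraMap K L (c : K) * Q.s) hc ?_ ?_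
      · intro β hβ r hr
        obtain ⟨x, hx⟩ := Q.hI2 β hβ
        refine ⟨algebraMap K L (r : K) * x, ?_, ?_⟩
        · intro z hz
          obtain ⟨c1, hc1⟩ := inv_mul_int q hq z hz r hr
          rw [← mul_assoc, ← map_mul, ← hc1]
          exact (c1.isIntegral_coe.algebraMap).mul x.isIntegral_coe
        · rw [map_mul, AlgEquiv.commutes, ← mul_sub, hx]
          simp only [map_mul]
          ring
      · intro u v hu hv
        obtain ⟨y1, h1, h1'⟩ := hu
        obtain ⟨y2, h2, h2'⟩ := hv
        refine ⟨y1 + y2, ?_, ?_⟩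
        · intro z hz
          rw [mul_add]
          exact (h1 z hz).add (h2 z hz)
        · simp only [map_add]
          linear_combination h1' + h2'
    obtain ⟨t0, ht0⟩ := Q.hfix (y + Q.σ y) (by rw [map_add, Q.hσσ, add_comm])
    obtain ⟨n0, hn0⟩ := Q.hfix (y * Q.σ y) (by rw [map_mul, Q.hσσ, mul_comm])
    obtain ⟨t, ht, htt⟩ := mem_of_inv q ⊤ hq t0 (by
      intro z hz
      refine ⟨⟨z * t0, hdesc _ ?_⟩, trivial, rfl⟩
      rw [map_mul, ht0, mul_add]
      have h1 := hσi _ (hy z hz)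
      rw [map_mul, AlgEquiv.commutes] at h1
      exact (hy z hz).add h1)
    obtain ⟨n, hn, hnn⟩ := mem_of_inv q q hq n0 (by
      intro z hz
      obtain ⟨n', hn', hnn'⟩ := mem_of_inv q ⊤ hq (z * n0) (by
        intro w hw
        refine ⟨⟨w * (z * n0), hdesc _ ?_⟩, trivial, rfl⟩
        rw [map_mul, map_mul, hn0]
        have h1 := hσi _ (hy z hz)
        rw [map_mul, AlgEquiv.commutes] at h1
        have h2 := (hy w hw).mul h1
        have h3 : algebraMap K L w * (algebraMap K L z * (y * Q.σ y)) =
          algebraMap K L w * y * (algebraMap K L z * Q.σ y) := by ring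
        rw [h3]
        exact h2)
      rw [Ideal.top_mul] at hn'
      exact ⟨n', hn', hnn'⟩)
    rw [Ideal.top_mul] at ht
    refine ⟨t, ht, Ideal.mem_span_singleton_mul.2 ⟨-n, ?_, ?_⟩⟩
    · rw [pow_two]; exact neg_mem hn
    · apply RingOfIntegers.ext
      apply (algebraMap K L).injective
      simp only [map_mul, map_neg, map_sub, map_pow, h4, htt, hnn, hDL, ht0, hn0, ← hcb, ← hyc]
      ring

end LemB

open NumberField Filter Topology nonZeroDivisors

section Bij
variable (K : Type*) [Field K] [NumberField K]

abbrev QF := {L : IntermediateField K (AlgebraicClosure K) // Module.finrank K L = 2}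

variable {K}

lemma QF.nf (L : QF K) : NumberField L.1 := by
  have : FiniteDimensional K L.1 := Module.finite_of_finrank_pos (by rw [L.2]; norm_num)
  exact NumberField.of_module_finite K L.1

instance (L : QF K) : NumberField L.1 := L.nf

noncomputable def QF.qd (L : QF K) : QD K L.1 := Classical.choice (qd_nonempty L.2)

noncomputable def QF.I0 (L : QF K) : (Ideal (𝓞 K))⁰ :=
  ⟨L.qd.I, mem_nonZeroDivisors_of_ne_zero L.qd.hI0⟩

noncomputable def QF.dd (L : QF K) : ℕ := (discr L.1).natAbs

/-- chosen representative -/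
noncomputable def rep (c : ClassGroup (𝓞 K)) : (Ideal (𝓞 K))⁰ :=
  Function.surjInv (ClassGroup.mk0_surjective (R := 𝓞 K)) c

lemma mk0_rep (c : ClassGroup (𝓞 K)) : ClassGroup.mk0 (rep c) = c :=
  Function.surjInv_eq _ c

def PSp (c : ClassGroup (𝓞 K)) (D : 𝓞 K) : Prop :=
  (¬ IsSquare (D : K)) ∧ ∃ t ∈ (rep c : Ideal (𝓞 K)), D - t ^ 2 ∈ Ideal.span {4} * (rep c : Ideal (𝓞 K)) ^ 2

def RR (x : QF K × (Ideal (𝓞 K))⁰) (y : ClassGroup (𝓞 K) × 𝓞 K) : Prop :=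
  ∃ g : 𝓞 K, g ≠ 0 ∧ (x.2 : Ideal (𝓞 K)) * x.1.qd.I * (rep y.1 : Ideal (𝓞 K)) = Ideal.span {g} ∧
    (y.2 : K) = x.1.qd.δ * (g : K) ^ 2

lemma RR_norm {x : QF K × (Ideal (𝓞 K))⁰} {y : ClassGroup (𝓞 K) × 𝓞 K} (h : RR x y) :
    ((discr K).natAbs : ℚ) ^ 2 * |Algebra.norm ℚ (y.2 : K)| =
      x.1.dd * (Ideal.absNorm (x.2 : Ideal (𝓞 K)) : ℚ) ^ 2 *
        (Ideal.absNorm (rep y.1 : Ideal (𝓞 K)) : ℚ) ^ 2 := by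
  obtain ⟨g, hg0, hg, hD⟩ := h
  have h1 := congrArg Ideal.absNorm hg
  rw [map_mul, map_mul, Ideal.absNorm_span_singleton] at h1
  have h2 : |Algebra.norm ℚ (g : K)| = Ideal.absNorm (x.2 : Ideal (𝓞 K)) * Ideal.absNorm x.1.qd.I *
      Ideal.absNorm (rep y.1 : Ideal (𝓞 K)) := by
    rw [← Algebra.coe_norm_int]
    have h3 : ((Algebra.norm ℤ g).natAbs : ℚ) = |((Algebra.norm ℤ g : ℤ) : ℚ)| := by
      rw [Nat.cast_natAbs]; push_cast; rfl
    rw [← h3, ← h1]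
    push_cast; rfl
  rw [hD, map_mul, map_pow, abs_mul, abs_pow, h2, QF.dd, x.1.qd.hd]
  ring

lemma mem_iff_span (L : QF K) (x : AlgebraicClosure K) (hx : x ∈ L.1) :
    ∃ a b : K, x = algebraMap K (AlgebraicClosure K) a + algebraMap K (AlgebraicClosure K) b * (L.qd.s : AlgebraicClosure K) := by
  set Q := L.qd
  obtain ⟨a, ha⟩ := Q.hfix ((⟨x, hx⟩ + Q.σ ⟨x, hx⟩) / 2) (by
    rw [map_div₀, map_add, Q.hσσ, map_ofNat, add_comm])
  obtain ⟨b, hb⟩ := Q.hfix ((⟨x, hx⟩ - Q.σ ⟨x, hx⟩) / (2 * Q.s)) (by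
    rw [map_div₀, map_sub, map_mul, Q.hσσ, map_ofNat, Q.hs, mul_neg, div_neg, ← neg_div, neg_sub])
  refine ⟨a, b, ?_⟩
  have h : (⟨x, hx⟩ : L.1) = algebraMap K L.1 a + algebraMap K L.1 b * Q.s := by
    rw [ha, hb]
    have := Q.hs0
    field_simp
    ring
  exact congrArg (fun z : L.1 => (z : AlgebraicClosure K)) h

lemma root_sq (L : QF K) (D g : K) (hD : D = L.qd.δ * g ^ 2) :
    (algebraMap K (AlgebraicClosure K) g * (L.qd.s : AlgebraicClosure K)) ^ 2 =
      algebraMap K (AlgebraicClosure K) D := by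
  have h := congrArg (fun z : L.1 => (z : AlgebraicClosure K)) L.qd.hδ
  have h' : (L.qd.s : AlgebraicClosure K) ^ 2 = algebraMap K (AlgebraicClosure K) L.qd.δ := h
  rw [mul_pow, h', hD, map_mul, map_pow]
  ring

lemma RR_L_le {L L' : QF K} {D g g' : K} (hg : g ≠ 0)
    (h : D = L.qd.δ * g ^ 2) (h' : D = L'.qd.δ * g' ^ 2) : L.1 ≤ L'.1 := by
  intro x hx
  obtain ⟨a, b, rfl⟩ := mem_iff_span L x hx
  have h1 := root_sq L D g h
  have h2 := root_sq L' D g' h'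
  rw [← h2] at h1
  have hm : algebraMap K (AlgebraicClosure K) g' * (L'.qd.s : AlgebraicClosure K) ∈ L'.1 :=
    mul_mem (L'.1.algebraMap_mem _) (L'.qd.s).2
  have hm2 : algebraMap K (AlgebraicClosure K) g * (L.qd.s : AlgebraicClosure K) ∈ L'.1 := by
    rcases sq_eq_sq_iff_eq_or_eq_neg.1 h1 with h | h
    · rw [h]; exact hm
    · rw [h]; exact neg_mem hm
  have hm3 : (L.qd.s : AlgebraicClosure K) ∈ L'.1 := by
    have h0 : algebraMap K (AlgebraicClosure K) g ≠ 0 := by simpa using hg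
    have : (L.qd.s : AlgebraicClosure K) = (algebraMap K (AlgebraicClosure K) g)⁻¹ *
      (algebraMap K (AlgebraicClosure K) g * (L.qd.s : AlgebraicClosure K)) := by
      rw [inv_mul_cancel_left₀ h0]
    rw [this]
    exact mul_mem (inv_mem (L'.1.algebraMap_mem _)) hm2
  exact add_mem (L'.1.algebraMap_mem _) (mul_mem (L'.1.algebraMap_mem _) hm3)

lemma coe_ne_zero_of {g : 𝓞 K} (hg : g ≠ 0) : (g : K) ≠ 0 := by
  rwa [Ne, RingOfIntegers.coe_eq_zero_iff]

lemma RR_inj {x x' : QF K × (Ideal (𝓞 K))⁰} {y : ClassGroup (𝓞 K) × 𝓞 K} (h : RR x y)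
    (h' : RR x' y) : x = x' := by
  obtain ⟨L, f⟩ := x
  obtain ⟨L', f'⟩ := x'
  obtain ⟨g, hg0, hg, hD⟩ := h
  obtain ⟨g', hg0', hg', hD'⟩ := h'
  have hL : L = L' := Subtype.ext (le_antisymm (RR_L_le (coe_ne_zero_of hg0) hD hD')
    (RR_L_le (coe_ne_zero_of hg0') hD' hD))
  subst hL
  have hδ : L.qd.δ ≠ 0 := by
    intro h0
    have := L.qd.hδ
    rw [h0, map_zero] at this
    exact L.qd.hs0 (pow_eq_zero_iff two_ne_zero |>.1 this)
  have hgg : (g : K) ^ 2 = (g' : K) ^ 2 := by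
    apply mul_left_cancel₀ hδ
    exact hD.symm.trans hD'
  have hsp : Ideal.span {g} = Ideal.span {g'} := by
    rcases sq_eq_sq_iff_eq_or_eq_neg.1 hgg with h | h
    · rw [RingOfIntegers.ext h]
    · have : g = -g' := RingOfIntegers.ext (by simpa using h)
      rw [this, Ideal.span_singleton_neg]
  rw [← hg, ← hg'] at hsp
  have h1 := mul_right_cancel₀ (nonZeroDivisors.coe_ne_zero (rep y.1)) hsp
  have h2 := mul_right_cancel₀ L.qd.hI0 h1
  have h3 : f = f' := Subtype.ext h2
  rw [h3]

lemma RR_fun (hu : ∀ u : (𝓞 K)ˣ, u = 1 ∨ u = -1) {x : QF K × (Ideal (𝓞 K))⁰}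
    {y y' : ClassGroup (𝓞 K) × 𝓞 K} (h : RR x y) (h' : RR x y') : y = y' := by
  obtain ⟨c, D⟩ := y
  obtain ⟨c', D'⟩ := y'
  obtain ⟨g, hg0, hg, hD⟩ := h
  obtain ⟨g', hg0', hg', hD'⟩ := h'
  have h1 := cg_of_span (x.2 * x.1.I0) (rep c) g hg
  have h2 := cg_of_span (x.2 * x.1.I0) (rep c') g' hg'
  rw [mk0_rep] at h1 h2
  have hc : c = c' := mul_left_cancel (h1.trans h2.symm)
  subst hc
  have hD2 : D = D' := by
    apply RingOfIntegers.ext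
    rcases span_eq_pm hu g g' (hg.symm.trans hg') with h | h
    · exact hD.trans (by rw [h]; exact hD'.symm)
    · refine hD.trans (Eq.trans ?_ hD'.symm)
      rw [h]; simp
  rw [hD2]

lemma RR_ex (x : QF K × (Ideal (𝓞 K))⁰) : ∃ y, RR x y ∧ PSp y.1 y.2 := by
  obtain ⟨L, f⟩ := x
  set Q := L.qd with hQ
  set c := (ClassGroup.mk0 (f * L.I0))⁻¹
  obtain ⟨g, hg0, hg⟩ := cg_gen (f * L.I0) (rep c) (by rw [mk0_rep, mul_inv_cancel])
  have hg1 : (f : Ideal (𝓞 K)) * Q.I * (rep c : Ideal (𝓞 K)) = Ideal.span {g} := hg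
  have hgIq : g ∈ Q.I * (rep c : Ideal (𝓞 K)) := by
    have : g ∈ (f : Ideal (𝓞 K)) * (Q.I * (rep c : Ideal (𝓞 K))) := by
      rw [← mul_assoc, hg1]; exact Ideal.mem_span_singleton_self _
    exact Ideal.mul_le_right this
  have hgI : g ∈ Q.I := Ideal.mul_le_left hgIq
  have hint : IsIntegral ℤ (Q.δ * (g : K) ^ 2) := by
    obtain ⟨x, hx⟩ := Q.hI2 g hgI
    have h1 : IsIntegral ℤ ((x : L.1) - Q.σ x) :=
      x.isIntegral_coe.sub ((x.isIntegral_coe).map (Q.σ.toAlgHom.restrictScalars ℤ))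
    have h2 : IsIntegral ℤ (algebraMap K L.1 (Q.δ * (g : K) ^ 2)) := by
      rw [map_mul, map_pow, ← Q.hδ, mul_comm, ← mul_pow, ← hx]
      exact h1.pow 2
    exact (isIntegral_algebraMap_iff (algebraMap K L.1).injective).1 h2
  refine ⟨(c, ⟨_, hint⟩), ⟨g, hg0, hg1, rfl⟩, ?_, ?_⟩
  · rintro ⟨k, hk⟩
    have hk' : Q.δ * (g : K) ^ 2 = k * k := hk
    have h1 : (algebraMap K L.1 (g : K) * Q.s) ^ 2 = (algebraMap K L.1 k) ^ 2 := by
      have h5 := congrArg (algebraMap K L.1) hk'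
      rw [map_mul, map_pow, map_mul] at h5
      rw [mul_pow, Q.hδ]
      linear_combination h5
    have h2 : ∃ k' : K, algebraMap K L.1 (g : K) * Q.s = algebraMap K L.1 k' := by
      rcases sq_eq_sq_iff_eq_or_eq_neg.1 h1 with h | h
      · exact ⟨k, h⟩
      · exact ⟨-k, by rw [h, map_neg]⟩
    obtain ⟨k', hk'⟩ := h2
    have h3 := congrArg Q.σ hk'
    rw [map_mul, AlgEquiv.commutes, AlgEquiv.commutes, Q.hs, mul_neg, ← hk'] at h3
    have h4 : algebraMap K L.1 (g : K) * Q.s = 0 := self_eq_neg.1 h3.symm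
    rcases mul_eq_zero.1 h4 with h | h
    · exact coe_ne_zero_of hg0 ((map_eq_zero _).1 h)
    · exact Q.hs0 h
  · exact (lemB Q (rep c : Ideal (𝓞 K)) (nonZeroDivisors.coe_ne_zero _) ⟨_, hint⟩ (g : K) rfl).2
      ⟨g, hgIq, rfl⟩

lemma RR_surj (c : ClassGroup (𝓞 K)) (D : 𝓞 K) (h : PSp c D) : ∃ x, RR x (c, D) := by
  obtain ⟨hns, ht⟩ := h
  obtain ⟨α, hα⟩ := IsAlgClosed.exists_pow_nat_eq (algebraMap K (AlgebraicClosure K) (D : K)) (n := 2)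
    (by norm_num)
  have hirr : Irreducible (Polynomial.X ^ 2 - Polynomial.C (D : K)) :=
    X_pow_sub_C_irreducible_of_prime Nat.prime_two (fun b hb => hns ⟨b, by rw [← hb, pow_two]⟩)
  have hmin : Polynomial.X ^ 2 - Polynomial.C (D : K) = minpoly K α :=
    minpoly.eq_of_irreducible_of_monic hirr (by simp [hα]) (by monicity!)
  have hαint : IsIntegral K α := Algebra.IsIntegral.isIntegral α
  obtain ⟨L, hαL⟩ : ∃ L : QF K, α ∈ L.1 := ⟨⟨IntermediateField.adjoin K {α}, by
    rw [IntermediateField.adjoin.finrank hαint, ← hmin]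
    compute_degree!⟩, IntermediateField.mem_adjoin_simple_self K α⟩
  set Q := L.qd
  let a : L.1 := ⟨α, hαL⟩
  have ha : a ^ 2 = algebraMap K L.1 (D : K) := Subtype.ext hα
  have hσa : Q.σ a = -a := by
    have h1 : (Q.σ a) ^ 2 = a ^ 2 := by rw [← map_pow, ha, AlgEquiv.commutes]
    rcases sq_eq_sq_iff_eq_or_eq_neg.1 h1 with h | h
    · exfalso
      obtain ⟨k, hk⟩ := Q.hfix a h
      apply hns
      refine ⟨k, (algebraMap K L.1).injective ?_⟩
      rw [← ha, map_mul, hk, pow_two]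
    · exact h
  obtain ⟨b, hb⟩ := Q.hfix (a / Q.s) (by rw [map_div₀, hσa, Q.hs, neg_div_neg_eq])
  have hDb : (D : K) = Q.δ * b ^ 2 := by
    apply (algebraMap K L.1).injective
    rw [← ha, map_mul, map_pow, hb, ← Q.hδ]
    have := Q.hs0
    field_simp
  obtain ⟨g, hg, hgb⟩ := (lemB Q (rep c : Ideal (𝓞 K)) (nonZeroDivisors.coe_ne_zero _) D b hDb).1 ht
  have hg0 : g ≠ 0 := by
    rintro rfl
    apply hns
    rw [hDb, ← hgb]
    exact ⟨0, by simp⟩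
  obtain ⟨f, hf⟩ := Ideal.dvd_iff_le.2 ((Ideal.span_singleton_le_iff_mem _).2 hg)
  have hf0 : f ≠ 0 := by
    rintro rfl
    rw [mul_zero, Submodule.zero_eq_bot, Ideal.span_singleton_eq_bot] at hf
    exact hg0 hf
  refine ⟨(L, ⟨f, mem_nonZeroDivisors_of_ne_zero hf0⟩), g, hg0, ?_, ?_⟩
  · rw [hf]
    change f * Q.I * (rep c : Ideal (𝓞 K)) = _
    ring
  · rw [hgb]; exact hDb

theorem bij (hu : ∀ u : (𝓞 K)ˣ, u = 1 ∨ u = -1) :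
    ∃ e : QF K × (Ideal (𝓞 K))⁰ ≃ {y : ClassGroup (𝓞 K) × 𝓞 K // PSp y.1 y.2},
      ∀ x, ((discr K).natAbs : ℚ) ^ 2 * |Algebra.norm ℚ ((e x).1.2 : K)| =
      x.1.dd * (Ideal.absNorm (x.2 : Ideal (𝓞 K)) : ℚ) ^ 2 *
        (Ideal.absNorm (rep (e x).1.1 : Ideal (𝓞 K)) : ℚ) ^ 2 := by
  choose F hF1 hF2 using RR_ex (K := K)
  refine ⟨Equiv.ofBijective (fun x => ⟨F x, hF2 x⟩) ⟨?_, ?_⟩, fun x => RR_norm (hF1 x)⟩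
  · intro x x' h
    have h' : F x = F x' := congrArg Subtype.val h
    exact RR_inj (hF1 x) (h' ▸ hF1 x')
  · rintro ⟨⟨c, D⟩, h⟩
    obtain ⟨x, hx⟩ := RR_surj c D h
    exact ⟨x, Subtype.ext (RR_fun hu (hF1 x) hx)⟩

end Bij

open NumberField Filter Topology nonZeroDivisors

section Coset
variable {K : Type*} [Field K] [NumberField K]

lemma coset_iff (q : Ideal (𝓞 K)) (hq : q ≠ ⊥) (t s : 𝓞 K) (ht : t ∈ q) (hs : s ∈ q) :
    t ^ 2 - s ^ 2 ∈ Ideal.span {4} * q ^ 2 ↔ t - s ∈ Ideal.span {2} * q := by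
  constructor
  · intro h
    obtain ⟨e, he, hee⟩ := Ideal.mem_span_singleton_mul.1 h
    have h1 : ∃ c ∈ (⊤ : Ideal (𝓞 K)) * q, (c : K) = ((t : K) - s) / 2 := by
      apply mem_of_inv q ⊤ hq
      intro z hz
      obtain ⟨c1, hc1⟩ := inv_mul_int q hq z hz s hs
      obtain ⟨c2, hc2⟩ := inv_mul_int2 q hq z hz e he
      have heK : (4 : K) * e = (t : K) ^ 2 - (s : K) ^ 2 := by
        have := congrArg (fun y : 𝓞 K => (y : K)) hee
        simp only [map_mul, map_sub, map_pow] at this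
        rw [show algebraMap (𝓞 K) K 4 = 4 from map_ofNat (algebraMap (𝓞 K) K) 4] at this
        exact this
      have hint : IsIntegral (𝓞 K) (z * (((t : K) - s) / 2)) := by
        refine ⟨Polynomial.X ^ 2 + Polynomial.C c1 * Polynomial.X - Polynomial.C c2, by monicity!, ?_⟩
        have h1 : algebraMap (𝓞 K) K c1 = z * s := hc1
        have h2 : algebraMap (𝓞 K) K c2 = z ^ 2 * e := hc2
        simp only [Polynomial.eval₂_sub, Polynomial.eval₂_add, Polynomial.eval₂_mul, Polynomial.eval₂_pow,
          Polynomial.eval₂_X, Polynomial.eval₂_C, h1, h2]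
        linear_combination (-z ^ 2 / 4) * heK
      obtain ⟨y, hy⟩ := IsIntegrallyClosed.isIntegral_iff.1 hint
      exact ⟨y, trivial, hy⟩
    obtain ⟨c, hc, hcc⟩ := h1
    rw [Ideal.top_mul] at hc
    refine Ideal.mem_span_singleton_mul.2 ⟨c, hc, ?_⟩
    apply RingOfIntegers.ext
    have h2 : ((2 * c : 𝓞 K) : K) = 2 * (c : K) := by
      change algebraMap (𝓞 K) K (2 * c) = 2 * algebraMap (𝓞 K) K c
      rw [map_mul, show algebraMap (𝓞 K) K 2 = 2 from map_ofNat (algebraMap (𝓞 K) K) 2]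
    have h3 : ((t - s : 𝓞 K) : K) = (t : K) - s := by simp
    rw [h2, h3, hcc]; ring
  · intro h
    obtain ⟨c, hc, hcc⟩ := Ideal.mem_span_singleton_mul.1 h
    refine Ideal.mem_span_singleton_mul.2 ⟨c * s + c * c, ?_, by
      linear_combination (t + s) * hcc + (-2 * c) * (sub_eq_iff_eq_add.1 hcc.symm)⟩
    rw [pow_two]
    exact add_mem (Ideal.mul_mem_mul hc hs) (Ideal.mul_mem_mul hc hc)

def SQ (q : Ideal (𝓞 K)) : AddSubgroup q.toAddSubgroup :=
  (Ideal.span {2} * q).toAddSubgroup.addSubgroupOf q.toAddSubgroup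

lemma mem_SQ (q : Ideal (𝓞 K)) (x : q.toAddSubgroup) :
    x ∈ SQ q ↔ (x : 𝓞 K) ∈ Ideal.span {2} * q := AddSubgroup.mem_addSubgroupOf

lemma absNorm_two (hdeg : Module.finrank ℚ K = 2) (n : ℕ) : Ideal.absNorm (Ideal.span {(n : 𝓞 K)}) = n ^ 2 := by
  rw [Ideal.absNorm_span_singleton, ← hdeg, ← RingOfIntegers.rank]
  have : (n : 𝓞 K) = algebraMap ℤ (𝓞 K) n := by simp
  rw [this, Algebra.norm_algebraMap, Int.natAbs_pow, Int.natAbs_natCast]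

lemma SQ_card (hdeg : Module.finrank ℚ K = 2) (q : Ideal (𝓞 K)) (hq : q ≠ ⊥) :
    Nat.card (q.toAddSubgroup ⧸ SQ q) = 4 := by
  have h1 := AddSubgroup.relIndex_mul_index
    (H := (Ideal.span {2} * q).toAddSubgroup) (K := q.toAddSubgroup) (Ideal.mul_le_right)
  have h2 : (Ideal.span {2} * q).toAddSubgroup.index = Ideal.absNorm (Ideal.span {2} * q) := rfl
  have h3 : q.toAddSubgroup.index = Ideal.absNorm q := rfl
  have h4 : Ideal.absNorm (Ideal.span {(2 : 𝓞 K)}) = 4 := absNorm_two hdeg 2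
  rw [h2, h3, map_mul, h4] at h1
  have h5 : Ideal.absNorm q ≠ 0 := by rwa [Ne, Ideal.absNorm_eq_zero_iff]
  exact Nat.eq_of_mul_eq_mul_right (Nat.pos_of_ne_zero h5) h1

noncomputable def cntA (φ : K →+* ℂ) (q : Ideal (𝓞 K)) (Y : ℝ) : ℕ :=
  Nat.card {x : 𝓞 K // (∃ t ∈ q, x - t ^ 2 ∈ Ideal.span {4} * q ^ 2) ∧ ‖φ x‖ ^ 2 ≤ Y}

lemma cntA_eq (φ : K →+* ℂ)
    (hφ : ∀ (φ : K →+* ℂ) (x : K), ((|Algebra.norm ℚ x| : ℚ) : ℝ) = ‖φ x‖ ^ 2)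
    (q : Ideal (𝓞 K)) (hq : q ≠ ⊥) (Y : ℝ) [Fintype (q.toAddSubgroup ⧸ SQ q)] :
    cntA φ q Y = ∑ i : q.toAddSubgroup ⧸ SQ q,
      cnt φ (Ideal.span {4} * q ^ 2) ((i.out : 𝓞 K) ^ 2) Y := by
  have hfin := fun i : q.toAddSubgroup ⧸ SQ q =>
    cnt_finite φ hφ (Ideal.span {4} * q ^ 2) ((i.out : 𝓞 K) ^ 2) Y
  unfold cntA cnt
  rw [← Nat.card_sigma]
  symm
  refine Nat.card_congr (Equiv.ofBijective
    (fun x => ⟨x.2.1, ⟨(x.1.out : 𝓞 K), x.1.out.2, x.2.2.1⟩, x.2.2.2⟩) ⟨?_, ?_⟩)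
  · rintro ⟨i, x, hx, hx'⟩ ⟨j, y, hy, hy'⟩ h
    have hxy : x = y := congrArg Subtype.val h
    subst hxy
    have h1 : (i.out : 𝓞 K) ^ 2 - (j.out : 𝓞 K) ^ 2 ∈ Ideal.span {4} * q ^ 2 := by
      have := sub_mem hy hx
      simpa using this
    have h2 := (coset_iff q hq _ _ i.out.2 j.out.2).1 h1
    have hij : i = j := by
      rw [← QuotientAddGroup.out_eq' i, ← QuotientAddGroup.out_eq' j, eq_comm, QuotientAddGroup.eq]
      rw [mem_SQ]
      have : ((-j.out + i.out : q.toAddSubgroup) : 𝓞 K) = i.out - j.out := by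
        rw [AddSubgroup.coe_add, AddSubgroup.coe_neg]; ring
      rw [this]
      exact h2
    subst hij
    rfl
  · rintro ⟨x, ⟨t, ht, hx⟩, hx'⟩
    refine ⟨⟨QuotientAddGroup.mk ⟨t, ht⟩, x, ?_, hx'⟩, rfl⟩
    set i : q.toAddSubgroup ⧸ SQ q := QuotientAddGroup.mk ⟨t, ht⟩ with hi
    have h1 : (QuotientAddGroup.mk i.out : q.toAddSubgroup ⧸ SQ q) = QuotientAddGroup.mk ⟨t, ht⟩ :=
      QuotientAddGroup.out_eq' i
    rw [QuotientAddGroup.eq, mem_SQ] at h1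
    have h2 : ((-i.out + ⟨t, ht⟩ : q.toAddSubgroup) : 𝓞 K) = t - i.out := by
      rw [AddSubgroup.coe_add, AddSubgroup.coe_neg]; ring
    rw [h2] at h1
    have h3 := (coset_iff q hq t _ ht i.out.2).2 h1
    have := add_mem hx h3
    simpa using this

lemma cntA_lim (hdeg : Module.finrank ℚ K = 2) (hu : ∀ u : (𝓞 K)ˣ, u = 1 ∨ u = -1) (φ : K →+* ℂ)
    (hφ : ∀ (φ : K →+* ℂ) (x : K), ((|Algebra.norm ℚ x| : ℚ) : ℝ) = ‖φ x‖ ^ 2)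
    (ρ : ℝ) (hρ : ∀ C : ClassGroup (𝓞 K), Tendsto (fun s : ℝ ↦
      (Nat.card {I : (Ideal (𝓞 K))⁰ //
        (Ideal.absNorm (I : Ideal (𝓞 K)) : ℝ) ≤ s ∧ ClassGroup.mk0 I = C} : ℝ) / s) atTop (𝓝 ρ))
    (q : (Ideal (𝓞 K))⁰) :
    Tendsto (fun Y : ℝ => (cntA φ (q : Ideal (𝓞 K)) Y : ℝ) / Y) atTop
      (𝓝 (ρ / (2 * (nI K q) ^ 2))) := by
  have hq : (q : Ideal (𝓞 K)) ≠ ⊥ := nonZeroDivisors.coe_ne_zero q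
  have hc := SQ_card hdeg (q : Ideal (𝓞 K)) hq
  have hfin : Finite ((q : Ideal (𝓞 K)).toAddSubgroup ⧸ SQ (q : Ideal (𝓞 K))) :=
    Nat.finite_of_card_ne_zero (by rw [hc]; norm_num)
  have := Fintype.ofFinite ((q : Ideal (𝓞 K)).toAddSubgroup ⧸ SQ (q : Ideal (𝓞 K)))
  have h4 : Ideal.absNorm (Ideal.span {(4 : 𝓞 K)}) = 16 := absNorm_two hdeg 4
  have h40 : Ideal.span {(4 : 𝓞 K)} ≠ 0 := by
    intro h
    rw [h] at h4
    simp at h4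
  let J : (Ideal (𝓞 K))⁰ := ⟨Ideal.span {4} * (q : Ideal (𝓞 K)) ^ 2,
    mem_nonZeroDivisors_of_ne_zero (mul_ne_zero h40 (pow_ne_zero 2 hq))⟩
  have hJ : (Ideal.absNorm (J : Ideal (𝓞 K)) : ℝ) = 16 * (nI K q) ^ 2 := by
    change ((Ideal.absNorm (Ideal.span {4} * (q : Ideal (𝓞 K)) ^ 2) : ℕ) : ℝ) = _
    rw [map_mul, map_pow, h4]
    push_cast
    rfl
  have h := tendsto_finsetSum (Finset.univ : Finset ((q : Ideal (𝓞 K)).toAddSubgroup ⧸ SQ (q : Ideal (𝓞 K))))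
    (fun i _ => cnt_lim hu φ hφ ρ hρ J ((i.out : 𝓞 K) ^ 2))
  rw [Finset.sum_const, Finset.card_univ, ← Nat.card_eq_fintype_card, hc, hJ] at h
  have hn := nI_ge_one K q
  convert h using 2 with Y
  · rw [cntA_eq φ hφ _ hq, ← Finset.sum_div]
    push_cast
    rfl
  · simp only [nsmul_eq_mul]
    push_cast
    field_simp
    ring

noncomputable def cntP (φ : K →+* ℂ) (c : ClassGroup (𝓞 K)) (Y : ℝ) : ℕ :=
  Nat.card {x : 𝓞 K // PSp c x ∧ ‖φ x‖ ^ 2 ≤ Y}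

lemma cntP_finite (φ : K →+* ℂ)
    (hφ : ∀ (φ : K →+* ℂ) (x : K), ((|Algebra.norm ℚ x| : ℚ) : ℝ) = ‖φ x‖ ^ 2)
    (c : ClassGroup (𝓞 K)) (Y : ℝ) : Finite {x : 𝓞 K // PSp c x ∧ ‖φ x‖ ^ 2 ≤ Y} :=
  (finite_phi φ hφ Y).subset fun _ hx => hx.2

lemma cntP_mono (φ : K →+* ℂ)
    (hφ : ∀ (φ : K →+* ℂ) (x : K), ((|Algebra.norm ℚ x| : ℚ) : ℝ) = ‖φ x‖ ^ 2)
    (c : ClassGroup (𝓞 K)) : Monotone (cntP φ c) := by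
  intro Y Z hYZ
  have := cntP_finite φ hφ c Z
  exact Nat.card_le_card_of_injective (fun x => ⟨x.1, x.2.1, x.2.2.trans hYZ⟩)
    (fun x y h => by simpa [Subtype.ext_iff] using h)

lemma cntP_le (φ : K →+* ℂ)
    (hφ : ∀ (φ : K →+* ℂ) (x : K), ((|Algebra.norm ℚ x| : ℚ) : ℝ) = ‖φ x‖ ^ 2)
    (c : ClassGroup (𝓞 K)) (Y : ℝ) : cntP φ c Y ≤ cntA φ (rep c : Ideal (𝓞 K)) Y := by
  have : Finite {x : 𝓞 K // (∃ t ∈ (rep c : Ideal (𝓞 K)), x - t ^ 2 ∈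
      Ideal.span {4} * (rep c : Ideal (𝓞 K)) ^ 2) ∧ ‖φ x‖ ^ 2 ≤ Y} :=
    (finite_phi φ hφ Y).subset fun _ hx => hx.2
  exact Nat.card_le_card_of_injective (fun x => ⟨x.1, x.2.1.2, x.2.2⟩)
    (fun x y h => by simpa [Subtype.ext_iff] using h)

lemma cntA_le (φ : K →+* ℂ)
    (hφ : ∀ (φ : K →+* ℂ) (x : K), ((|Algebra.norm ℚ x| : ℚ) : ℝ) = ‖φ x‖ ^ 2)
    (c : ClassGroup (𝓞 K)) (Y : ℝ) :
    cntA φ (rep c : Ideal (𝓞 K)) Y ≤ cntP φ c Y + cnt φ ⊤ 0 (Real.sqrt Y) := by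
  classical
  have f1 := cntP_finite φ hφ c Y
  have f2 := cnt_finite φ hφ ⊤ 0 (Real.sqrt Y)
  unfold cntA cntP cnt
  rw [← Nat.card_sum]
  have key : ∀ x : 𝓞 K, IsSquare (x : K) → ‖φ x‖ ^ 2 ≤ Y →
      ∃ b : 𝓞 K, b ^ 2 = x ∧ ‖φ b‖ ^ 2 ≤ Real.sqrt Y := by
    rintro x ⟨k, hk⟩ hx
    have hint : IsIntegral (𝓞 K) k := by
      apply IsIntegral.of_pow (n := 2) (by norm_num)
      rw [pow_two, ← hk]
      exact isIntegral_algebraMap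
    obtain ⟨y, hy⟩ := IsIntegrallyClosed.isIntegral_iff.1 hint
    have hy' : (y : K) = k := hy
    refine ⟨y, RingOfIntegers.ext ?_, ?_⟩
    · have : ((y ^ 2 : 𝓞 K) : K) = (y : K) ^ 2 := by simp
      rw [this, hy', hk, pow_two]
    · apply Real.le_sqrt_of_sq_le
      refine le_trans (le_of_eq ?_) hx
      rw [hk, hy', map_mul, norm_mul]; ring
  refine Nat.card_le_card_of_injective (fun x => if h : IsSquare (x.1 : K) then
      Sum.inr ⟨(key x.1 h x.2.2).choose, trivial, (key x.1 h x.2.2).choose_spec.2⟩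
      else Sum.inl ⟨x.1, ⟨h, x.2.1⟩, x.2.2⟩) ?_
  intro x y h
  by_cases hx : IsSquare (x.1 : K) <;> by_cases hy : IsSquare (y.1 : K) <;>
    simp only [hx, hy, dif_pos, not_false_eq_true, dif_neg, reduceCtorEq, Sum.inr.injEq,
      Sum.inl.injEq, Subtype.mk.injEq] at h
  · apply Subtype.ext
    rw [← (key x.1 hx x.2.2).choose_spec.1, ← (key y.1 hy y.2.2).choose_spec.1, h]
  · exact Subtype.ext h

lemma cntP_lim (hdeg : Module.finrank ℚ K = 2) (hu : ∀ u : (𝓞 K)ˣ, u = 1 ∨ u = -1) (φ : K →+* ℂ)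
    (hφ : ∀ (φ : K →+* ℂ) (x : K), ((|Algebra.norm ℚ x| : ℚ) : ℝ) = ‖φ x‖ ^ 2)
    (ρ : ℝ) (hρ : ∀ C : ClassGroup (𝓞 K), Tendsto (fun s : ℝ ↦
      (Nat.card {I : (Ideal (𝓞 K))⁰ //
        (Ideal.absNorm (I : Ideal (𝓞 K)) : ℝ) ≤ s ∧ ClassGroup.mk0 I = C} : ℝ) / s) atTop (𝓝 ρ))
    (c : ClassGroup (𝓞 K)) :
    Tendsto (fun Y : ℝ => (cntP φ c Y : ℝ) / Y) atTop
      (𝓝 (ρ / (2 * (nI K (rep c)) ^ 2))) := by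
  have hA := cntA_lim hdeg hu φ hφ ρ hρ (rep c)
  have h1 := (cnt_lim hu φ hφ ρ hρ 1 0).comp Real.tendsto_sqrt_atTop
  have h2 : Tendsto (fun Y : ℝ => (Real.sqrt Y)⁻¹) atTop (𝓝 0) :=
    tendsto_inv_atTop_zero.comp Real.tendsto_sqrt_atTop
  have h3 := hA.sub (h1.mul h2)
  rw [mul_zero, sub_zero] at h3
  refine tendsto_of_tendsto_of_tendsto_of_le_of_le' h3 hA ?_ ?_
  · filter_upwards [eventually_gt_atTop 0] with Y hY
    have h4 := cntA_le φ hφ c Y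
    have h4' : (cntA φ (rep c : Ideal (𝓞 K)) Y : ℝ) ≤ cntP φ c Y + cnt φ ⊤ 0 (Real.sqrt Y) := by
      exact_mod_cast h4
    have h5 : ((cnt φ ((1 : (Ideal (𝓞 K))⁰) : Ideal (𝓞 K)) 0 (Real.sqrt Y) : ℕ) : ℝ) / Real.sqrt Y * (Real.sqrt Y)⁻¹ =
        cnt φ ⊤ 0 (Real.sqrt Y) / Y := by
      rw [← div_eq_mul_inv, div_div, Real.mul_self_sqrt hY.le, OneMemClass.coe_one, Ideal.one_eq_top]
    simp only [Function.comp]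
    rw [h5, ← sub_div]
    gcongr
    linarith
  · filter_upwards [eventually_gt_atTop 0] with Y hY
    gcongr
    exact cntP_le φ hφ c Y

end Coset

open NumberField Filter Topology nonZeroDivisors

lemma card_fibers {S ι : Type*} [Finite S] (f : S → ι) :
    (Nat.card S : ℝ) = ∑' i, (Nat.card {s // f s = i} : ℝ) := by
  classical
  have := Fintype.ofFinite S
  rw [tsum_eq_sum (s := Finset.univ.image f)]
  · rw [Nat.card_eq_fintype_card, ← Finset.card_univ, Finset.card_eq_sum_card_image f Finset.univ]
    push_cast
    refine Finset.sum_congr rfl fun i _ => ?_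
    rw [Nat.card_eq_fintype_card, Fintype.card_subtype]
  · intro i hi
    have : IsEmpty {s // f s = i} := ⟨fun s => hi (Finset.mem_image.2 ⟨s.1, Finset.mem_univ _, s.2⟩)⟩
    simp

section Main
variable {K : Type*} [Field K] [NumberField K]

noncomputable def cQ (K : Type*) [Field K] [NumberField K] (Y : ℝ) : ℝ :=
  (Nat.card {L : QF K // (L.dd : ℝ) ≤ Y} : ℝ)

noncomputable def cT (φ : K →+* ℂ) (Y : ℝ) : ℝ :=
  ∑ c : ClassGroup (𝓞 K), (cntP φ c (Y * (nI K (rep c)) ^ 2 / ((discr K).natAbs : ℝ) ^ 2) : ℝ)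

lemma cT_mono (φ : K →+* ℂ)
    (hφ : ∀ (φ : K →+* ℂ) (x : K), ((|Algebra.norm ℚ x| : ℚ) : ℝ) = ‖φ x‖ ^ 2) :
    Monotone (cT φ) := by
  intro Y Z h
  unfold cT
  refine Finset.sum_le_sum fun c _ => ?_
  have : cntP φ c (Y * (nI K (rep c)) ^ 2 / ((discr K).natAbs : ℝ) ^ 2) ≤
    cntP φ c (Z * (nI K (rep c)) ^ 2 / ((discr K).natAbs : ℝ) ^ 2) := cntP_mono φ hφ c (by gcongr)
  exact_mod_cast this

lemma cQ_zero (Y : ℝ) (hY : Y < 1) : cQ K Y = 0 := by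
  have : IsEmpty {L : QF K // (L.dd : ℝ) ≤ Y} := by
    refine ⟨fun L => ?_⟩
    have h1 : 1 ≤ L.1.dd := Nat.one_le_iff_ne_zero.2 (Int.natAbs_ne_zero.2 (discr_ne_zero _))
    have h2 : (1 : ℝ) ≤ L.1.dd := by exact_mod_cast h1
    have := L.2
    linarith
  simp [cQ]

lemma cT_lim (hdeg : Module.finrank ℚ K = 2) (hu : ∀ u : (𝓞 K)ˣ, u = 1 ∨ u = -1) (φ : K →+* ℂ)
    (hφ : ∀ (φ : K →+* ℂ) (x : K), ((|Algebra.norm ℚ x| : ℚ) : ℝ) = ‖φ x‖ ^ 2)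
    (ρ : ℝ) (hρ : ∀ C : ClassGroup (𝓞 K), Tendsto (fun s : ℝ ↦
      (Nat.card {I : (Ideal (𝓞 K))⁰ //
        (Ideal.absNorm (I : Ideal (𝓞 K)) : ℝ) ≤ s ∧ ClassGroup.mk0 I = C} : ℝ) / s) atTop (𝓝 ρ)) :
    Tendsto (fun Y => cT φ Y / Y) atTop
      (𝓝 ((classNumber K : ℝ) * (ρ / (2 * ((discr K).natAbs : ℝ) ^ 2)))) := by
  have hd : (0 : ℝ) < ((discr K).natAbs : ℝ) := by
    exact_mod_cast Int.natAbs_pos.2 (discr_ne_zero K)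
  have h : Tendsto (fun Y => ∑ c : ClassGroup (𝓞 K),
      ((cntP φ c (Y * (nI K (rep c)) ^ 2 / ((discr K).natAbs : ℝ) ^ 2) : ℝ) / Y)) atTop
      (𝓝 (∑ _c : ClassGroup (𝓞 K), ρ / (2 * ((discr K).natAbs : ℝ) ^ 2))) := by
    refine tendsto_finsetSum _ fun c _ => ?_
    have hn : 0 < nI K (rep c) := lt_of_lt_of_le one_pos (nI_ge_one K _)
    set a : ℝ := (nI K (rep c)) ^ 2 / ((discr K).natAbs : ℝ) ^ 2 with ha
    have ha0 : 0 < a := by positivity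
    have h1 := ((cntP_lim hdeg hu φ hφ ρ hρ c).comp (tendsto_id.atTop_mul_const ha0)).mul_const a
    convert h1 using 2 with Y
    · simp only [Function.comp, id]
      rw [mul_div_assoc, ← ha]
      field_simp
    · rw [ha]
      field_simp
  rw [Finset.sum_const, Finset.card_univ, nsmul_eq_mul] at h
  refine h.congr fun Y => ?_
  rw [cT, Finset.sum_div]

lemma cT_eq (hu : ∀ u : (𝓞 K)ˣ, u = 1 ∨ u = -1) (φ : K →+* ℂ)
    (hφ : ∀ (φ : K →+* ℂ) (x : K), ((|Algebra.norm ℚ x| : ℚ) : ℝ) = ‖φ x‖ ^ 2) (Y : ℝ) :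
    cT φ Y = ∑' g, cQ K (Y / (nI K g) ^ 2) := by
  have hd : (0 : ℝ) < ((discr K).natAbs : ℝ) := by
    exact_mod_cast Int.natAbs_pos.2 (discr_ne_zero K)
  obtain ⟨e, he⟩ := bij hu
  have he' : ∀ x : QF K × (Ideal (𝓞 K))⁰, ((discr K).natAbs : ℝ) ^ 2 * ‖φ ((e x).1.2 : K)‖ ^ 2 =
      x.1.dd * (nI K x.2) ^ 2 * (nI K (rep (e x).1.1)) ^ 2 := by
    intro x
    have h := congrArg (fun q : ℚ => (q : ℝ)) (he x)
    simp only [Rat.cast_mul, Rat.cast_pow, Rat.cast_natCast] at h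
    rw [hφ φ] at h
    exact h
  have hiff : ∀ x : QF K × (Ideal (𝓞 K))⁰, (x.1.dd : ℝ) * (nI K x.2) ^ 2 ≤ Y ↔
      ‖φ ((e x).1.2 : K)‖ ^ 2 ≤ Y * (nI K (rep (e x).1.1)) ^ 2 / ((discr K).natAbs : ℝ) ^ 2 := by
    intro x
    have hn : 0 < nI K (rep (e x).1.1) := lt_of_lt_of_le one_pos (nI_ge_one K _)
    rw [le_div_iff₀ (by positivity), mul_comm (‖_‖ ^ 2), he' x, mul_le_mul_iff_left₀ (by positivity)]
  have hfin := fun c => cntP_finite φ hφ c (Y * (nI K (rep c)) ^ 2 / ((discr K).natAbs : ℝ) ^ 2)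
  let E : {x : QF K × (Ideal (𝓞 K))⁰ // (x.1.dd : ℝ) * (nI K x.2) ^ 2 ≤ Y} ≃
      Σ c : ClassGroup (𝓞 K), {D : 𝓞 K // PSp c D ∧
        ‖φ D‖ ^ 2 ≤ Y * (nI K (rep c)) ^ 2 / ((discr K).natAbs : ℝ) ^ 2} :=
    { toFun := fun x => ⟨(e x.1).1.1, (e x.1).1.2, (e x.1).2, (hiff x.1).1 x.2⟩
      invFun := fun y => ⟨e.symm ⟨(y.1, y.2.1), y.2.2.1⟩, (hiff _).2 (by
        rw [e.apply_symm_apply]; exact y.2.2.2)⟩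
      left_inv := fun x => Subtype.ext (e.symm_apply_apply x.1)
      right_inv := by
        rintro ⟨c, D, h1, h2⟩
        have h3 := e.apply_symm_apply ⟨(c, D), h1⟩
        ext1
        · exact congrArg (fun z => z.1.1) h3
        · exact congrArg (fun z => z.1.2) h3 }
  have : Finite {x : QF K × (Ideal (𝓞 K))⁰ // (x.1.dd : ℝ) * (nI K x.2) ^ 2 ≤ Y} :=
    Finite.of_equiv _ E.symm
  have h1 : cT φ Y = (Nat.card {x : QF K × (Ideal (𝓞 K))⁰ // (x.1.dd : ℝ) * (nI K x.2) ^ 2 ≤ Y} : ℝ) := by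
    rw [Nat.card_congr E, Nat.card_sigma, cT]
    push_cast
    rfl
  rw [h1, card_fibers (fun x : {x : QF K × (Ideal (𝓞 K))⁰ // (x.1.dd : ℝ) * (nI K x.2) ^ 2 ≤ Y} => x.1.2)]
  refine tsum_congr fun g => ?_
  have hn : 0 < nI K g := lt_of_lt_of_le one_pos (nI_ge_one K _)
  unfold cQ
  congr 1
  refine Nat.card_congr
    { toFun := fun x => ⟨x.1.1.1, by
        rw [le_div_iff₀ (by positivity)]
        have := x.1.2
        rwa [x.2] at this⟩
      invFun := fun L => ⟨⟨(L.1, g), by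
        have := L.2
        rwa [le_div_iff₀ (by positivity)] at this⟩, rfl⟩
      left_inv := by
        rintro ⟨⟨⟨L, g'⟩, h⟩, h'⟩
        simp only at h'
        subst h'
        rfl
      right_inv := fun L => rfl }

lemma main_lim (hdeg : Module.finrank ℚ K = 2) (hu : ∀ u : (𝓞 K)ˣ, u = 1 ∨ u = -1) (φ : K →+* ℂ)
    (hφ : ∀ (φ : K →+* ℂ) (x : K), ((|Algebra.norm ℚ x| : ℚ) : ℝ) = ‖φ x‖ ^ 2)
    (ρ : ℝ) (hρ : ∀ C : ClassGroup (𝓞 K), Tendsto (fun s : ℝ ↦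
      (Nat.card {I : (Ideal (𝓞 K))⁰ //
        (Ideal.absNorm (I : Ideal (𝓞 K)) : ℝ) ≤ s ∧ ClassGroup.mk0 I = C} : ℝ) / s) atTop (𝓝 ρ)) :
    Tendsto (fun Y => cQ K Y / Y) atTop
      (𝓝 ((classNumber K : ℝ) * (ρ / (2 * ((discr K).natAbs : ℝ) ^ 2)) / zeta2 K)) :=
  tauber K (cQ K) (cT φ) _ cQ_zero (cT_mono φ hφ) (cT_eq hu φ hφ) (cT_lim hdeg hu φ hφ ρ hρ)

end Main

open NumberField Filter Topology nonZeroDivisors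

lemma zeta_eq (K : Type*) [Field K] [NumberField K] : dedekindZetaTwo K = zeta2 K := by
  unfold dedekindZetaTwo zeta2
  let e : {I : Ideal (𝓞 K) // I ≠ ⊥} ≃ (Ideal (𝓞 K))⁰ :=
    Equiv.subtypeEquivRight fun I => mem_nonZeroDivisors_iff_ne_zero.symm
  rw [← e.tsum_eq]
  refine tsum_congr fun I => ?_
  rw [zpow_neg]
  rfl

lemma quadCount_eq (K : Type*) [Field K] [NumberField K] (n : ℕ) : (quadCount K n : ℝ) = cQ K n := by
  unfold quadCount cQ
  congr 1
  refine Nat.card_congr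
    { toFun := fun L => ⟨⟨L.1, L.2.1⟩, by
        obtain ⟨h, h2⟩ := L.2.2
        rw [Int.abs_eq_natAbs] at h2
        exact_mod_cast h2⟩
      invFun := fun L => ⟨L.1.1, L.1.2, L.1.nf, by
        have h2 := L.2
        rw [Int.abs_eq_natAbs]
        exact_mod_cast h2⟩
      left_inv := fun L => rfl
      right_inv := fun L => rfl }

lemma gfin (K : Type*) [Field K] [NumberField K] (hdeg : Module.finrank ℚ K = 2) :
    ∏ᶠ 𝔭 ∈ {𝔭 : Ideal (𝓞 K) | 𝔭.IsPrime ∧ (2 : 𝓞 K) ∈ 𝔭},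
          gFactor (Ideal.absNorm 𝔭) 1 / (1 + ((Ideal.absNorm 𝔭 : ℝ))⁻¹) = 1 := by
  apply finprod_mem_of_eqOn_one
  rintro P ⟨hP, h2⟩
  have e2 : ∀ x : ℝ, 0 < x → x ^ (-(2 * 1 : ℝ)) = (x ^ 2)⁻¹ := by
    intro x hx
    rw [Real.rpow_neg hx.le, mul_one, Real.rpow_ofNat]
  have e3 : ∀ x : ℝ, 0 < x → x ^ (-(3 * 1 : ℝ)) = (x ^ 3)⁻¹ := by
    intro x hx
    rw [Real.rpow_neg hx.le, mul_one, Real.rpow_ofNat]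
  rcases kf_two hdeg P hP h2 with h | h
  · simp only [h, gFactor, if_true, Pi.one_apply]
    push_cast
    rw [e2 2 (by norm_num), e3 2 (by norm_num)]
    norm_num
  · simp only [h, gFactor, Pi.one_apply]
    rw [if_neg (by norm_num)]
    push_cast
    rw [e2 4 (by norm_num), e3 4 (by norm_num)]
    norm_num

theorem quadratic_count_imaginary (p : ℕ) (hp : p.Prime) (hp3 : 3 < p) (hpmod : p % 4 = 3)
    (K : Type*) [Field K] [NumberField K]
    (hdeg : Module.finrank ℚ K = 2) (hsqrt : ∃ x : K, x ^ 2 = -(p : K)) :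
    Tendsto (fun n : ℕ => (quadCount K n : ℝ) / (n : ℝ)) atTop
      (nhds ((Real.pi * (NumberField.classNumber K : ℝ)) /
          (2 * (p : ℝ) ^ ((5 : ℝ) / 2) * dedekindZetaTwo K) *
        ∏ᶠ 𝔭 ∈ {𝔭 : Ideal (𝓞 K) | 𝔭.IsPrime ∧ (2 : 𝓞 K) ∈ 𝔭},
          gFactor (Ideal.absNorm 𝔭) 1 / (1 + ((Ideal.absNorm 𝔭 : ℝ))⁻¹))) := by
  obtain ⟨r, hr⟩ := hsqrt
  have hφ := kf_norm hp hdeg hr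
  have hu := kf_units hp hp3 hdeg hr
  have hd := kf_discr hp hpmod hdeg hr
  have φ : K →+* ℂ := Classical.arbitrary _
  have hp0 : (0 : ℝ) < p := by exact_mod_cast hp.pos
  have hρ : ∀ C : ClassGroup (𝓞 K), Tendsto (fun s : ℝ ↦
      (Nat.card {I : (Ideal (𝓞 K))⁰ //
        (Ideal.absNorm (I : Ideal (𝓞 K)) : ℝ) ≤ s ∧ ClassGroup.mk0 I = C} : ℝ) / s) atTop
        (nhds (Real.pi / Real.sqrt p)) := by
    intro C
    have h := NumberField.Ideal.tendsto_norm_le_and_mk_eq_div_atTop K C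
    obtain ⟨h0, h1, h2⟩ := kf_nrc hp hdeg hr
    have hd' : |discr K| = (p : ℤ) := by rw [Int.abs_eq_natAbs, hd]
    have hd'' : |((discr K : ℤ) : ℝ)| = (p : ℝ) := by
      rw [← Int.cast_abs, hd']; simp
    rw [h0, h1, kf_reg hp hdeg hr, kf_tors hp hp3 hdeg hr] at h
    convert h using 2
    simp only [Int.cast_abs, hd'']
    push_cast
    field_simp
  have h := (main_lim hdeg hu φ hφ _ hρ).comp tendsto_natCast_atTop_atTop
  rw [gfin K hdeg, mul_one, zeta_eq]
  have hpow : (p : ℝ) ^ ((5 : ℝ) / 2) = (p : ℝ) ^ 2 * Real.sqrt p := by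
    rw [Real.sqrt_eq_rpow, ← Real.rpow_ofNat, ← Real.rpow_add hp0]
    norm_num
  have hz := zeta2_pos K
  have hs : 0 < Real.sqrt (p : ℝ) := Real.sqrt_pos.2 hp0
  have hc : (classNumber K : ℝ) * (Real.pi / Real.sqrt p / (2 * ((discr K).natAbs : ℝ) ^ 2)) / zeta2 K =
      (Real.pi * (classNumber K : ℝ)) / (2 * (p : ℝ) ^ ((5 : ℝ) / 2) * zeta2 K) := by
    rw [hd, hpow]
    field_simp
  rw [← hc]
  refine h.congr fun n => ?_
  rw [quadCount_eq]
  rfl
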